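/- arXiv:1609.04438 — 2 statements merged into one kernel-verified Lean document; each statement's English description precedes it below -/
import Mathlib

section
/- Let $n\geq 1$, $s\in(0,1)$, $e\in\partial B_1\subset\mathbb{R}^n$. Let $\phi_\star$ be the first Dirichlet eigenfunction of $(-\Delta)^s$ on $B_1$ with eigenvalue $\lambda_\star>0$, and let $\kappa_\star=2^s\kappa(n,s)\int_{B_1}\phi_\star(z)\frac{(1-|z|^2)^s}{s|z-e|^n}\,dz$. Then for every multi-index $\alpha\in\mathbb{N}^n$, the distributional limit $\lim_{\varepsilon\searrow0}\varepsilon^{|\alpha|-s}\partial^\alpha\phi_\star(e+\varepsilon X)=(-1)^{|\alpha|}\kappa_\star\lambda_\star\,\partial^\alpha_X\big[(-e\cdot X)_+^s\big]$ holds; that is, for every test function $\psi\in C^\infty_c(\mathbb{R}^n)$ one has $\lim_{\varepsilon\searrow0}\varepsilon^{-s}\int_{\mathbb{R}^n}\phi_\star(e+\varepsilon X)\,\partial^\alpha\psi(X)\,dX=\kappa_\star\lambda_\star\int_{\mathbb{R}^n}(-e\cdot X)_+^s\,\partial^\alpha\psi(X)\,dX$. -/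
open MeasureTheory Filter Metric Set
open scoped RealInnerProductSpace

/-- The normalizing constant `C(n,s)` of the fractional Laplacian. -/
noncomputable def fracC (n : ℕ) (s : ℝ) : ℝ :=
  4 ^ s * s * Real.Gamma ((n : ℝ) / 2 + s) / (Real.pi ^ ((n : ℝ) / 2) * Real.Gamma (1 - s))

/-- `HasFracLap n s u x L` : the principal value limit defining `(-Δ)^s u (x)`
exists and equals `L`. -/
def HasFracLap (n : ℕ) (s : ℝ) (u : EuclideanSpace ℝ (Fin n) → ℝ)
    (x : EuclideanSpace ℝ (Fin n)) (L : ℝ) : Prop :=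
  Tendsto (fun ρ : ℝ =>
      fracC n s * ∫ y in {y : EuclideanSpace ℝ (Fin n) | ρ ≤ ‖y‖},
        (u x - u (x + y)) / ‖y‖ ^ ((n : ℝ) + 2 * s))
    (nhdsWithin 0 (Set.Ioi 0)) (nhds L)

/-- The constant `κ(n,s) = Γ(n/2) / (4^s π^{n/2} Γ(s)²)`. -/
noncomputable def kappaC (n : ℕ) (s : ℝ) : ℝ :=
  Real.Gamma ((n : ℝ) / 2) / (4 ^ s * Real.pi ^ ((n : ℝ) / 2) * Real.Gamma s ^ 2)

/-- Directional (line) derivative along the vector `v`. -/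
noncomputable def dirDeriv {n : ℕ} (v : EuclideanSpace ℝ (Fin n))
    (g : EuclideanSpace ℝ (Fin n) → ℝ) : EuclideanSpace ℝ (Fin n) → ℝ :=
  fun p => lineDeriv ℝ g p v

/-- The mixed partial derivative `∂^α g` associated with a multi-index `α ∈ ℕ^n`. -/
noncomputable def multiDeriv {n : ℕ} (α : Fin n → ℕ)
    (g : EuclideanSpace ℝ (Fin n) → ℝ) : EuclideanSpace ℝ (Fin n) → ℝ :=
  (Finset.univ : Finset (Fin n)).toList.foldr
    (fun i h => (dirDeriv (EuclideanSpace.single i 1))^[α i] h) g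

/-- Change of variables for the inversion `w ↦ (k / ‖w‖ ^ 2) • w`. -/
theorem integral_comp_inversion (n : ℕ) [NeZero n] {k : ℝ} (hk : k ≠ 0)
    (g : EuclideanSpace ℝ (Fin n) → ℝ) :
    ∫ y, g y = ∫ w, (|k| ^ n / ‖w‖ ^ (2 * n)) * g ((k / ‖w‖ ^ 2) • w) := by
  rw [← restrict_compl_singleton (μ := volume) (0 : EuclideanSpace ℝ (Fin n))]
  set f : EuclideanSpace ℝ (Fin n) → EuclideanSpace ℝ (Fin n) := fun w => (k / ‖w‖ ^ 2) • w with hf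
  have hfi : ∀ w ∈ ({0}ᶜ : Set (EuclideanSpace ℝ (Fin n))), f (f w) = w := by
    intro w hw
    have hw' : ‖w‖ ≠ 0 := by simpa using hw
    simp only [hf, norm_smul, smul_smul, norm_div, norm_pow, abs_norm, Real.norm_eq_abs]
    have : k / (|k| / ‖w‖ ^ 2 * ‖w‖) ^ 2 * (k / ‖w‖ ^ 2) = 1 := by
      have h2 : |k| ≠ 0 := abs_ne_zero.2 hk
      field_simp
      rw [sq_abs]
    rw [this, one_smul]
  have hfm : ∀ w ∈ ({0}ᶜ : Set (EuclideanSpace ℝ (Fin n))), f w ∈ ({0}ᶜ : Set _) := by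
    intro w hw
    have hw' : w ≠ 0 := by simpa using hw
    simp [hf, hk, hw']
  have himg : f '' {0}ᶜ = {0}ᶜ := by
    ext y
    constructor
    · rintro ⟨w, hw, rfl⟩
      exact hfm w hw
    · intro hy
      exact ⟨f y, hfm y hy, hfi y hy⟩
  have hinj : InjOn f {0}ᶜ := fun a ha b hb hab => by
    rw [← hfi a ha, ← hfi b hb, hab]
  have hder : ∀ w ∈ ({0}ᶜ : Set (EuclideanSpace ℝ (Fin n))), HasFDerivWithinAt f
      (k • ((1 / dist w 0) ^ 2 •
        ((ℝ ∙ (w - 0))ᗮ.reflection : EuclideanSpace ℝ (Fin n) →L[ℝ] EuclideanSpace ℝ (Fin n))))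
      {0}ᶜ w := by
    intro w hw
    have h := (EuclideanGeometry.hasFDerivAt_inversion (c := 0) (R := 1) (x := w)
      (by simpa using hw)).const_smul k
    refine (h.congr_of_eventuallyEq (Eventually.of_forall fun z => ?_)).hasFDerivWithinAt
    simp [hf, EuclideanGeometry.inversion, smul_smul, div_eq_mul_inv]
  have := integral_image_eq_integral_abs_det_fderiv_smul volume
    (measurableSet_singleton (0 : EuclideanSpace ℝ (Fin n))).compl hder hinj g
  rw [himg] at this
  rw [this]
  refine setIntegral_congr_fun (measurableSet_singleton _).compl fun w hw => ?_
  have hw' : ‖w‖ ≠ 0 := by simpa using hw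
  have hdet : |(k • ((1 / dist w 0) ^ 2 •
        ((ℝ ∙ (w - 0))ᗮ.reflection : EuclideanSpace ℝ (Fin n) →L[ℝ] EuclideanSpace ℝ (Fin n)))).det|
      = |k| ^ n / ‖w‖ ^ (2 * n) := by
    rw [smul_smul]
    have : ∀ (c : ℝ) (A : EuclideanSpace ℝ (Fin n) →L[ℝ] EuclideanSpace ℝ (Fin n)),
        (c • A).det = c ^ n * A.det := by
      intro c A
      simp [ContinuousLinearMap.det, LinearMap.det_smul]
    rw [this, abs_mul]
    have h1 : |(((ℝ ∙ (w - 0))ᗮ.reflection :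
        EuclideanSpace ℝ (Fin n) →L[ℝ] EuclideanSpace ℝ (Fin n))).det| = 1 := by
      have := Submodule.det_reflection (𝕜 := ℝ) ((ℝ ∙ (w - 0))ᗮ)
      rw [ContinuousLinearMap.det]
      erw [this]
      simp
    rw [h1]
    simp [abs_mul, abs_pow, mul_pow, pow_mul, div_eq_mul_inv]
  simp only [hdet, smul_eq_mul, hf]

/-- One-dimensional change of variables for the two ends of a chord. -/
theorem lintegral_chord (F : ℝ → ENNReal) (hF : Measurable F) (β c : ℝ) 
    (hF0 : ∀ p ≤ β, F p = 0) :
    (∫⁻ r in Ioi (0 : ℝ), F (β + 2 * c * r + r ^ 2) * ENNReal.ofReal (1 / r)) +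
      ∫⁻ r in Ioi (0 : ℝ), F (β - 2 * c * r + r ^ 2) * ENNReal.ofReal (1 / r) =
    ∫⁻ p in Ioi β, F p * ENNReal.ofReal (1 / (p - β)) := by
  wlog hc : 0 ≤ c generalizing c
  · have := this (-c) (by linarith)
    rw [← this, add_comm]
    simp [sub_eq_add_neg]
  have key : ∀ d : ℝ, (∫⁻ r in Ioi (0 : ℝ), F (β + 2 * d * r + r ^ 2) * ENNReal.ofReal (1 / r)) =
      ∫⁻ u in Ioi d, F (β - d ^ 2 + u ^ 2) * ENNReal.ofReal (1 / (u - d)) := by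
    intro d
    have hm : MeasurePreserving (fun r : ℝ => r + d) volume volume :=
      measurePreserving_add_right volume d
    have := hm.setLIntegral_comp_preimage_emb (measurableEmbedding_addRight d)
      (fun u => F (β - d ^ 2 + u ^ 2) * ENNReal.ofReal (1 / (u - d))) (Ioi d)
    rw [← this]
    have hpre : (fun r : ℝ => r + d) ⁻¹' Ioi d = Ioi 0 := by ext; simp
    rw [hpre]
    refine lintegral_congr fun r => ?_
    ring_nf
  have key2 : (∫⁻ u in Ioi (-c), F (β - c ^ 2 + u ^ 2) * ENNReal.ofReal (1 / (u + c))) =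
      ∫⁻ u in Ioi c, F (β - c ^ 2 + u ^ 2) * ENNReal.ofReal (1 / (u + c)) := by
    symm
    rw [← Ioc_union_Ioi_eq_Ioi (show -c ≤ c by linarith),
      lintegral_union measurableSet_Ioi Ioc_disjoint_Ioi_same,
      setLIntegral_eq_zero measurableSet_Ioc, zero_add]
    intro u hu
    simp only [mem_Ioc] at hu
    have := hF0 (β - c ^ 2 + u ^ 2) (by nlinarith)
    simp [this]
  have e2 := key (-c)
  simp only [mul_neg, neg_mul, ← sub_eq_add_neg, neg_sq, sub_neg_eq_add] at e2
  rw [key c, e2, key2, ← lintegral_add_left (by fun_prop)]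
  have himg : (fun u : ℝ => β - c ^ 2 + u ^ 2) '' Ioi c = Ioi β := by
    ext p
    simp only [mem_image, mem_Ioi]
    constructor
    · rintro ⟨u, hu, rfl⟩
      nlinarith
    · intro hp
      refine ⟨√(p - β + c ^ 2), ?_, ?_⟩
      · exact Real.lt_sqrt_of_sq_lt (by linarith)
      · rw [Real.sq_sqrt (by nlinarith)]; ring
  have hinj : InjOn (fun u : ℝ => β - c ^ 2 + u ^ 2) (Ioi c) := by
    intro a ha b hb hab
    simp only [mem_Ioi] at ha hb hab
    have : a ^ 2 = b ^ 2 := by linarith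
    exact (sq_eq_sq₀ (by linarith) (by linarith)).1 this
  have hcv := lintegral_image_eq_lintegral_abs_deriv_mul (s := Ioi c) measurableSet_Ioi
    (f := fun u : ℝ => β - c ^ 2 + u ^ 2) (f' := fun u => 2 * u)
    (fun u _ => by
      have := ((hasDerivAt_pow 2 u).const_add (β - c ^ 2)).hasDerivWithinAt (s := Ioi c)
      simpa using this) hinj
    (fun p => F p * ENNReal.ofReal (1 / (p - β)))
  rw [himg] at hcv
  rw [hcv]
  refine setLIntegral_congr_fun measurableSet_Ioi fun u hu => ?_
  simp only [mem_Ioi] at hu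
  rw [← mul_add, ← ENNReal.ofReal_add (by apply div_nonneg <;> linarith) (by apply div_nonneg <;> linarith),
    mul_left_comm, ← ENNReal.ofReal_mul (by positivity)]
  congr 2
  have h1 : u - c ≠ 0 := by linarith
  have h2 : u + c ≠ 0 := by linarith
  have h3 : β - c ^ 2 + u ^ 2 - β ≠ 0 := by
    have : (u - c) * (u + c) ≠ 0 := mul_ne_zero h1 h2
    intro h; apply this; linarith
  rw [abs_of_nonneg (by linarith)]
  field_simp
  ring

theorem lintegral_polar (n : ℕ) [NeZero n] (H : EuclideanSpace ℝ (Fin n) → ENNReal)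
    (hH : Measurable H) :
    ∫⁻ v, H v = ∫⁻ θ, (∫⁻ r in Ioi (0 : ℝ),
      ENNReal.ofReal (r ^ (n - 1)) * H (r • (θ : EuclideanSpace ℝ (Fin n))))
        ∂(volume : Measure (EuclideanSpace ℝ (Fin n))).toSphere := by
  have hpres := (volume : Measure (EuclideanSpace ℝ (Fin n))).measurePreserving_homeomorphUnitSphereProd
  have h1 : ∫⁻ v, H v = ∫⁻ x : ({(0)}ᶜ : Set (EuclideanSpace ℝ (Fin n))), H x
      ∂((volume : Measure (EuclideanSpace ℝ (Fin n))).comap (↑)) := by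
    rw [lintegral_subtype_comap (measurableSet_singleton _).compl, restrict_compl_singleton]
  have h2 := hpres.lintegral_comp_emb (Homeomorph.measurableEmbedding _)
    (fun p => H ((p.2 : ℝ) • (p.1 : EuclideanSpace ℝ (Fin n))))
  have h3 : ∀ x : ({(0)}ᶜ : Set (EuclideanSpace ℝ (Fin n))),
      H (((homeomorphUnitSphereProd _ x).2 : ℝ) •
        ((homeomorphUnitSphereProd _ x).1 : EuclideanSpace ℝ (Fin n))) = H x := by
    intro x
    congr 1
    have hx : ‖(x : EuclideanSpace ℝ (Fin n))‖ ≠ 0 := norm_ne_zero_iff.2 x.2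
    simp [smul_smul, hx]
  simp only [h3] at h2
  rw [h1, h2, lintegral_prod _ (by fun_prop)]
  refine lintegral_congr fun θ => ?_
  simp only [Measure.volumeIoiPow]
  rw [lintegral_withDensity_eq_lintegral_mul _ (by fun_prop) (by fun_prop)]
  simp only [Pi.mul_apply, finrank_euclideanSpace_fin]
  rw [lintegral_subtype_comap measurableSet_Ioi
    (fun r : ℝ => ENNReal.ofReal (r ^ (n - 1)) * H (r • (θ : EuclideanSpace ℝ (Fin n))))]

/-- The total mass of the unit sphere of `ℝⁿ`. -/
noncomputable def sphereMass (n : ℕ) : ℝ :=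
  n * (volume : Measure (EuclideanSpace ℝ (Fin n))).real (ball 0 1)

theorem toSphere_univ_eq_sphereMass (n : ℕ) :
    (volume : Measure (EuclideanSpace ℝ (Fin n))).toSphere univ = ENNReal.ofReal (sphereMass n) := by
  have := (volume : Measure (EuclideanSpace ℝ (Fin n))).toSphere_real_apply_univ
  rw [finrank_euclideanSpace_fin] at this
  rw [sphereMass, ← this, ofReal_measureReal]

theorem sphereMass_eq (n : ℕ) [NeZero n] :
    sphereMass n = 2 * Real.pi ^ ((n : ℝ) / 2) / Real.Gamma ((n : ℝ) / 2) := by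
  have hn : (0 : ℝ) < n := by exact_mod_cast Nat.pos_of_ne_zero (NeZero.ne n)
  rw [sphereMass, Measure.real, EuclideanSpace.volume_ball]
  have hG : Real.Gamma ((n : ℝ) / 2 + 1) = (n : ℝ) / 2 * Real.Gamma ((n : ℝ) / 2) :=
    Real.Gamma_add_one (by positivity)
  have hG0 : 0 < Real.Gamma ((n : ℝ) / 2) := Real.Gamma_pos_of_pos (by positivity)
  simp only [ENNReal.ofReal_one, one_pow, one_mul, Fintype.card_fin]
  rw [ENNReal.toReal_ofReal (by rw [hG]; positivity), hG, Real.sqrt_eq_rpow,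
    ← Real.rpow_natCast, ← Real.rpow_mul Real.pi_pos.le]
  rw [show (1 / 2 * (n : ℝ)) = (n : ℝ) / 2 by ring]
  field_simp

theorem sphereMass_pos (n : ℕ) [NeZero n] : 0 < sphereMass n := by
  have hn : (0 : ℝ) < n := by exact_mod_cast Nat.pos_of_ne_zero (NeZero.ne n)
  have hG0 : 0 < Real.Gamma ((n : ℝ) / 2) := Real.Gamma_pos_of_pos (by positivity)
  rw [sphereMass_eq]
  positivity

/-- Integration of a radial function against the kernel `‖w - b‖ ^ (-n)`. -/
theorem lintegral_radial_kernel (n : ℕ) [NeZero n] (F : ℝ → ENNReal) (hF : Measurable F)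
    (b : EuclideanSpace ℝ (Fin n)) (hF0 : ∀ p ≤ ‖b‖ ^ 2, F p = 0) :
    2 * ∫⁻ w, F (‖w‖ ^ 2) * ENNReal.ofReal (1 / ‖w - b‖ ^ n) =
      (∫⁻ p in Ioi (‖b‖ ^ 2), F p * ENNReal.ofReal (1 / (p - ‖b‖ ^ 2))) *
        ENNReal.ofReal (sphereMass n) := by
  set H : EuclideanSpace ℝ (Fin n) → ENNReal :=
    fun v => F (‖v + b‖ ^ 2) * ENNReal.ofReal (1 / ‖v‖ ^ n) with hHdef
  have hH : Measurable H := by fun_prop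
  have h1 : ∫⁻ w, F (‖w‖ ^ 2) * ENNReal.ofReal (1 / ‖w - b‖ ^ n) = ∫⁻ v, H v := by
    rw [← lintegral_add_right_eq_self _ b]
    simp [hHdef]
  have h2 : ∫⁻ v, H v = ∫⁻ v, H (-v) := (lintegral_neg_eq_self H).symm
  have hr : ∀ (θ : sphere (0 : EuclideanSpace ℝ (Fin n)) 1) (r : ℝ), 0 < r → ∀ ε : ℝ, ε ^ 2 = 1 →
      ENNReal.ofReal (r ^ (n - 1)) * H (ε • r • (θ : EuclideanSpace ℝ (Fin n))) =
      F (‖b‖ ^ 2 + ε * (2 * ⟪b, (θ : EuclideanSpace ℝ (Fin n))⟫ * r) + r ^ 2) *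
        ENNReal.ofReal (1 / r) := by
    intro θ r hr ε hε
    have hθ : ‖(θ : EuclideanSpace ℝ (Fin n))‖ = 1 := by simp
    have hε' : |ε| = 1 := by
      have := sq_abs ε
      rw [hε] at this
      nlinarith [abs_nonneg ε]
    simp only [hHdef]
    rw [mul_left_comm, ← ENNReal.ofReal_mul (by positivity)]
    congr 2
    · rw [norm_add_sq_real, norm_smul, norm_smul, hθ, real_inner_smul_left, real_inner_smul_left,
        real_inner_comm]
      simp [hε', abs_of_pos hr]
      ring
    · rw [norm_smul, norm_smul, hθ]
      simp only [Real.norm_eq_abs, hε', abs_of_pos hr, mul_one, one_mul]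
      have : r ^ n = r ^ (n - 1) * r := by
        rw [← pow_succ, Nat.sub_add_cancel (Nat.pos_of_ne_zero (NeZero.ne n))]
      rw [this]
      field_simp
  rw [h1, two_mul]
  nth_rewrite 2 [h2]
  rw [lintegral_polar n H hH, lintegral_polar n (fun v => H (-v)) (by fun_prop)]
  rw [← lintegral_add_left (by fun_prop)]
  rw [← toSphere_univ_eq_sphereMass, ← lintegral_const]
  refine lintegral_congr fun θ => ?_
  rw [← lintegral_chord F hF _ ⟪b, (θ : EuclideanSpace ℝ (Fin n))⟫ hF0]
  congr 1
  · refine setLIntegral_congr_fun measurableSet_Ioi fun r hr' => ?_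
    simpa using hr θ r hr' 1 (by norm_num)
  · refine setLIntegral_congr_fun measurableSet_Ioi fun r hr' => ?_
    simpa [sub_eq_add_neg] using hr θ r hr' (-1) (by norm_num)

theorem integral_radial_kernel (n : ℕ) [NeZero n] (F : ℝ → ℝ) (hF : Measurable F)
    (hFn : ∀ p, 0 ≤ F p) (b : EuclideanSpace ℝ (Fin n)) (hF0 : ∀ p ≤ ‖b‖ ^ 2, F p = 0) :
    ∫ w, F (‖w‖ ^ 2) * (1 / ‖w - b‖ ^ n) =
      sphereMass n / 2 * ∫ p in Ioi (‖b‖ ^ 2), F p * (1 / (p - ‖b‖ ^ 2)) := by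
  have h := lintegral_radial_kernel n (fun p => ENNReal.ofReal (F p)) (by fun_prop) b
    (fun p hp => by simp [hF0 p hp])
  simp_rw [← ENNReal.ofReal_mul (hFn _)] at h
  rw [integral_eq_lintegral_of_nonneg_ae
    (Eventually.of_forall fun w => mul_nonneg (hFn _) (by positivity))
    (by apply Measurable.aestronglyMeasurable; fun_prop),
    integral_eq_lintegral_of_nonneg_ae
    ((ae_restrict_mem measurableSet_Ioi).mono fun p hp =>
      mul_nonneg (hFn _) (div_nonneg zero_le_one (sub_nonneg.2 (le_of_lt hp))))
    (by apply Measurable.aestronglyMeasurable; fun_prop)]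
  have := congrArg ENNReal.toReal h
  rw [ENNReal.toReal_mul, ENNReal.toReal_mul, ENNReal.toReal_ofReal (sphereMass_pos n).le] at this
  simp only [ENNReal.toReal_ofNat] at this
  linarith

theorem integral_norm_rpow_tail (n : ℕ) [NeZero n] {s ρ : ℝ} (hs : 0 < s) (hρ : 0 < ρ) :
    ∫ y in {y : EuclideanSpace ℝ (Fin n) | ρ ≤ ‖y‖}, 1 / ‖y‖ ^ ((n : ℝ) + 2 * s) =
      sphereMass n * (ρ ^ (-(2 * s)) / (2 * s)) := by
  have hm : MeasurableSet {y : EuclideanSpace ℝ (Fin n) | ρ ≤ ‖y‖} :=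
    measurableSet_le measurable_const measurable_norm
  have h1 := integral_fun_norm_addHaar (volume : Measure (EuclideanSpace ℝ (Fin n)))
    (fun r : ℝ => (Ici ρ).indicator (fun r => 1 / r ^ ((n : ℝ) + 2 * s)) r)
  rw [← integral_indicator hm]
  have h2 : ∀ y : EuclideanSpace ℝ (Fin n), {y : EuclideanSpace ℝ (Fin n) | ρ ≤ ‖y‖}.indicator
      (fun y => 1 / ‖y‖ ^ ((n : ℝ) + 2 * s)) y =
      (Ici ρ).indicator (fun r => 1 / r ^ ((n : ℝ) + 2 * s)) ‖y‖ := by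
    intro y; simp [indicator]
  simp_rw [h2]
  rw [h1, finrank_euclideanSpace_fin, sphereMass]
  simp only [nsmul_eq_mul, smul_eq_mul]
  rw [mul_assoc]
  congr 2
  have h3 : ∀ r : ℝ, r ^ (n - 1) * (Ici ρ).indicator (fun r => 1 / r ^ ((n : ℝ) + 2 * s)) r =
      (Ici ρ).indicator (fun r => r ^ (n - 1) * (1 / r ^ ((n : ℝ) + 2 * s))) r := by
    intro r; simp [indicator]
  simp_rw [h3]
  rw [setIntegral_indicator measurableSet_Ici,
    inter_eq_right.2 (show Ici ρ ⊆ Ioi 0 from fun r hr => lt_of_lt_of_le hρ hr),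
    integral_Ici_eq_integral_Ioi]
  have h4 : ∀ r ∈ Ioi ρ, r ^ (n - 1) * (1 / r ^ ((n : ℝ) + 2 * s)) = r ^ (-1 - 2 * s) := by
    intro r hr
    have hr0 : 0 < r := hρ.trans hr
    rw [← Real.rpow_natCast, Nat.cast_sub (Nat.pos_of_ne_zero (NeZero.ne n)), one_div,
      ← Real.rpow_neg hr0.le, ← Real.rpow_add hr0]
    congr 1; push_cast; ring
  rw [setIntegral_congr_fun measurableSet_Ioi h4, integral_Ioi_rpow_of_lt (by linarith) hρ]
  rw [show -1 - 2 * s + 1 = -(2 * s) by ring]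
  rw [neg_div_neg_eq]

theorem integrableOn_norm_rpow_tail (n : ℕ) [NeZero n] {s ρ : ℝ} (hs : 0 < s) (hρ : 0 < ρ) :
    IntegrableOn (fun y : EuclideanSpace ℝ (Fin n) => 1 / ‖y‖ ^ ((n : ℝ) + 2 * s))
      {y | ρ ≤ ‖y‖} := by
  apply Integrable.of_integral_ne_zero
  rw [integral_norm_rpow_tail n hs hρ]
  have := sphereMass_pos n
  have := Real.rpow_pos_of_pos hρ (-(2 * s))
  positivity

theorem integral_beta {a b : ℝ} (ha : 0 < a) (hb : 0 < b) :
    ∫ x in Ioo (0 : ℝ) 1, x ^ (a - 1) * (1 - x) ^ (b - 1) =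
      Real.Gamma a * Real.Gamma b / Real.Gamma (a + b) := by
  have h := ProbabilityTheory.beta_eq_betaIntegralReal a b ha hb
  rw [ProbabilityTheory.beta] at h
  rw [h, Complex.betaIntegral, intervalIntegral.integral_of_le zero_le_one,
    ← integral_Ioc_eq_integral_Ioo]
  rw [← RCLike.re_eq_complex_re, ← integral_re]
  · rw [integral_Ioc_eq_integral_Ioo, integral_Ioc_eq_integral_Ioo]
    refine setIntegral_congr_fun measurableSet_Ioo fun x hx => ?_
    simp only [RCLike.re_eq_complex_re]
    rw [← Complex.ofReal_one, ← Complex.ofReal_sub, ← Complex.ofReal_sub, ← Complex.ofReal_sub, ← Complex.ofReal_cpow hx.1.le,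
      ← Complex.ofReal_cpow (by linarith [hx.2]), ← Complex.ofReal_mul, Complex.ofReal_re]
  · have := Complex.betaIntegral_convergent (u := a) (v := b) (by simpa) (by simpa)
    rwa [intervalIntegrable_iff_integrableOn_Ioc_of_le zero_le_one] at this

theorem integral_rpow_div_add {s γ : ℝ} (hs : s ∈ Ioo (0 : ℝ) 1) (hγ : 0 < γ) :
    ∫ τ in Ioi (0 : ℝ), γ * τ ^ (s - 1) / (τ + γ) =
      γ ^ s * (Real.Gamma s * Real.Gamma (1 - s)) := by
  have himg : (fun r : ℝ => γ * r / (1 - r)) '' Ioo 0 1 = Ioi 0 := by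
    ext τ
    simp only [mem_image, mem_Ioo, mem_Ioi]
    constructor
    · rintro ⟨r, ⟨h0, h1⟩, rfl⟩
      exact div_pos (by positivity) (by linarith)
    · intro hτ
      refine ⟨τ / (τ + γ), ⟨by positivity, by rw [div_lt_one (by positivity)]; linarith⟩, ?_⟩
      have h1 : 1 - τ / (τ + γ) = γ / (τ + γ) := by field_simp; ring
      rw [h1]
      field_simp
  have hinj : InjOn (fun r : ℝ => γ * r / (1 - r)) (Ioo 0 1) := by
    intro a ha c hc hac
    have h1 : 1 - a ≠ 0 := by linarith [ha.2]
    have h2 : 1 - c ≠ 0 := by linarith [hc.2]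
    simp only at hac
    rw [div_eq_div_iff h1 h2] at hac
    have : γ * (a - c) = 0 := by linarith
    rcases mul_eq_zero.1 this with h | h
    · exact absurd h hγ.ne'
    · linarith
  have hder : ∀ r ∈ Ioo (0 : ℝ) 1, HasDerivWithinAt (fun r : ℝ => γ * r / (1 - r))
      (γ / (1 - r) ^ 2) (Ioo 0 1) r := by
    intro r hr
    have h1 : 1 - r ≠ 0 := by linarith [hr.2]
    have := ((hasDerivAt_id r).const_mul γ).div ((hasDerivAt_id r).const_sub 1) h1
    refine (this.congr_deriv ?_).hasDerivWithinAt
    simp only [id, mul_one, mul_neg, sub_neg_eq_add]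
    congr 1; ring
  have h := integral_image_eq_integral_abs_deriv_smul measurableSet_Ioo hder hinj
    (fun τ => γ * τ ^ (s - 1) / (τ + γ))
  rw [himg] at h
  have hb := integral_beta hs.1 (show 0 < 1 - s by linarith [hs.2])
  rw [show s + (1 - s) = 1 by ring, Real.Gamma_one, div_one] at hb
  rw [h, ← hb, ← integral_const_mul]
  refine setIntegral_congr_fun measurableSet_Ioo fun r hr => ?_
  have h1 : 0 < 1 - r := by linarith [hr.2]
  have hr0 : 0 < r := hr.1
  simp only [smul_eq_mul]
  rw [abs_of_pos (by positivity), Real.div_rpow (by positivity) h1.le, Real.mul_rpow hγ.le hr0.le,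
    show (1 - s - 1) = -s by ring, Real.rpow_neg h1.le, Real.rpow_sub h1, Real.rpow_one,
    Real.rpow_sub hγ, Real.rpow_one, show γ * r / (1 - r) + γ = γ / (1 - r) by field_simp; ring]
  have hp := Real.rpow_pos_of_pos h1 s
  field_simp

theorem integrableOn_rpow_div_add {s γ : ℝ} (hs : s ∈ Ioo (0 : ℝ) 1) (hγ : 0 < γ) :
    IntegrableOn (fun τ => γ * τ ^ (s - 1) / (τ + γ)) (Ioi (0 : ℝ)) := by
  apply Integrable.of_integral_ne_zero
  rw [integral_rpow_div_add hs hγ]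
  have := Real.Gamma_pos_of_pos hs.1
  have := Real.Gamma_pos_of_pos (show 0 < 1 - s by linarith [hs.2])
  positivity

/-- The kernel `(‖v‖ ^ 2 - 1)₊ ^ s / ‖v - b‖ ^ n`. -/
noncomputable def exteriorKernel (n : ℕ) (s : ℝ) (b v : EuclideanSpace ℝ (Fin n)) : ℝ :=
  max (‖v‖ ^ 2 - 1) 0 ^ s * (1 / ‖v - b‖ ^ n)

theorem integral_exteriorKernel_closedBall (n : ℕ) [NeZero n] {s : ℝ} (hs : s ∈ Ioo (0 : ℝ) 1)
    (b : EuclideanSpace ℝ (Fin n)) (hb : ‖b‖ < 1) {R : ℝ} (hR : 1 < R) :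
    ∫ v in closedBall 0 R, exteriorKernel n s b v =
      sphereMass n / 2 * ((R ^ 2 - 1) ^ s / s -
        ∫ τ in (0 : ℝ)..(R ^ 2 - 1), (1 - ‖b‖ ^ 2) * τ ^ (s - 1) / (τ + (1 - ‖b‖ ^ 2))) := by
  have hb2 : ‖b‖ ^ 2 < 1 := by nlinarith [norm_nonneg b]
  have hR2 : 1 < R ^ 2 := by nlinarith
  have h1 : ∀ v : EuclideanSpace ℝ (Fin n),
      (closedBall 0 R).indicator (exteriorKernel n s b) v =
      (Ioc 1 (R ^ 2)).indicator (fun p => (p - 1) ^ s) (‖v‖ ^ 2) * (1 / ‖v - b‖ ^ n) := by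
    intro v
    by_cases hv : ‖v‖ ≤ R
    · have hv2 : ‖v‖ ^ 2 ≤ R ^ 2 := by nlinarith [norm_nonneg v]
      rw [indicator_of_mem (by simpa using hv), exteriorKernel]
      congr 1
      by_cases hv1 : 1 < ‖v‖ ^ 2
      · rw [indicator_of_mem (show ‖v‖ ^ 2 ∈ Ioc 1 (R ^ 2) from ⟨hv1, hv2⟩), max_eq_left (by linarith)]
      · rw [indicator_of_notMem (fun h => hv1 h.1), max_eq_right (by linarith),
          Real.zero_rpow hs.1.ne']
    · have hv2 : ¬ ‖v‖ ^ 2 ≤ R ^ 2 := by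
        push Not at hv ⊢
        nlinarith [norm_nonneg v]
      rw [indicator_of_notMem (by simpa using hv), indicator_of_notMem (fun h => hv2 h.2), zero_mul]
  rw [← integral_indicator measurableSet_closedBall]
  simp_rw [h1]
  rw [integral_radial_kernel n _ (Measurable.indicator (by fun_prop) measurableSet_Ioc)
    (fun p => indicator_nonneg (fun p hp => Real.rpow_nonneg (by linarith [hp.1]) _) _) b
    (fun p hp => indicator_of_notMem (fun h => by linarith [h.1]) _)]
  congr 1
  have h0 : ∀ p : ℝ, (Ioc 1 (R ^ 2)).indicator (fun p => (p - 1) ^ s) p * (1 / (p - ‖b‖ ^ 2)) =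
      (Ioc 1 (R ^ 2)).indicator (fun p => (p - 1) ^ s * (1 / (p - ‖b‖ ^ 2))) p := by
    intro p; simp [indicator]
  simp_rw [h0]
  rw [setIntegral_indicator measurableSet_Ioc, inter_eq_right.2 (fun p hp => by
      simp only [mem_Ioi]; linarith [hp.1]), ← intervalIntegral.integral_of_le hR2.le]
  have h2 := intervalIntegral.integral_comp_add_right (a := 0) (b := R ^ 2 - 1)
    (fun p => (p - 1) ^ s * (1 / (p - ‖b‖ ^ 2))) 1
  simp only [zero_add, sub_add_cancel, add_sub_cancel_right] at h2
  rw [← h2]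
  have hi1 : IntervalIntegrable (fun τ : ℝ => τ ^ (s - 1)) volume 0 (R ^ 2 - 1) :=
    intervalIntegral.intervalIntegrable_rpow' (by linarith [hs.1])
  have hi2 : IntervalIntegrable (fun τ => (1 - ‖b‖ ^ 2) * τ ^ (s - 1) / (τ + (1 - ‖b‖ ^ 2)))
      volume 0 (R ^ 2 - 1) := by
    rw [intervalIntegrable_iff_integrableOn_Ioc_of_le (by linarith)]
    exact (integrableOn_rpow_div_add hs (by linarith)).mono_set Ioc_subset_Ioi_self
  have h3 : (R ^ 2 - 1) ^ s / s = ∫ τ in (0 : ℝ)..(R ^ 2 - 1), τ ^ (s - 1) := by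
    rw [integral_rpow (Or.inl (by linarith [hs.1]))]
    simp [Real.zero_rpow hs.1.ne']
  rw [h3, ← intervalIntegral.integral_sub hi1 hi2]
  rw [intervalIntegral.integral_of_le (by linarith), intervalIntegral.integral_of_le (by linarith)]
  refine setIntegral_congr_fun measurableSet_Ioc fun τ hτ => ?_
  have hτ0 : 0 < τ := hτ.1
  have h4 : 0 < τ + (1 - ‖b‖ ^ 2) := by linarith
  rw [show τ + 1 - ‖b‖ ^ 2 = τ + (1 - ‖b‖ ^ 2) by ring, Real.rpow_sub hτ0, Real.rpow_one]
  field_simp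
  ring

theorem continuous_exteriorKernel (n : ℕ) {s : ℝ} (hs : 0 < s) {b : EuclideanSpace ℝ (Fin n)}
    (hb : ‖b‖ < 1) : Continuous (exteriorKernel n s b) := by
  rw [continuous_iff_continuousAt]
  intro v
  by_cases hv : v = b
  · subst hv
    have : (exteriorKernel n s v) =ᶠ[nhds v] fun _ => 0 := by
      have h : ∀ᶠ w in nhds v, ‖w‖ < 1 := continuous_norm.continuousAt.eventually_lt_const hb
      filter_upwards [h] with w hw
      rw [exteriorKernel, max_eq_right (by nlinarith [norm_nonneg w]), Real.zero_rpow hs.ne',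
        zero_mul]
    exact continuousAt_const.congr this.symm
  · have h0 : ‖v - b‖ ^ n ≠ 0 := pow_ne_zero _ (norm_ne_zero_iff.2 (sub_ne_zero.2 hv))
    unfold exteriorKernel
    refine ContinuousAt.mul ?_ ?_
    · exact ContinuousAt.rpow_const (by fun_prop) (Or.inr hs.le)
    · exact ContinuousAt.div (by fun_prop) (by fun_prop) h0

/-- Bounds of the exterior kernel on an annulus. -/
theorem exteriorKernel_mem_Icc (n : ℕ) {s R : ℝ} (hs : 0 < s) {b v : EuclideanSpace ℝ (Fin n)}
    (hb : ‖b‖ < 1) (hR : 2 < R) (h1 : R - 1 ≤ ‖v‖) (h2 : ‖v‖ ≤ R + 1) :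
    exteriorKernel n s b v ∈
      Icc (((R - 2) ^ 2) ^ s * (1 / (R + 2) ^ n)) (((R + 2) ^ 2) ^ s * (1 / (R - 2) ^ n)) := by
  have h3 : ‖v - b‖ ≤ R + 2 := (norm_sub_le v b).trans (by linarith)
  have h4 : R - 2 ≤ ‖v - b‖ := le_trans (by linarith) (norm_sub_norm_le v b)
  have h5 : 0 < R - 2 := by linarith
  have h6 : 0 < ‖v - b‖ := by linarith
  have h7 : (R - 2) ^ 2 ≤ max (‖v‖ ^ 2 - 1) 0 := le_max_of_le_left (by nlinarith)
  have h8 : max (‖v‖ ^ 2 - 1) 0 ≤ (R + 2) ^ 2 := max_le (by nlinarith [norm_nonneg v]) (by positivity)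
  unfold exteriorKernel
  constructor
  · gcongr
  · gcongr

theorem tendsto_recenter_error (n : ℕ) {s : ℝ} (hs : s < 1) :
    Tendsto (fun R : ℝ => (((R + 2) ^ 2) ^ s * (1 / (R - 2) ^ n) -
      ((R - 2) ^ 2) ^ s * (1 / (R + 2) ^ n)) * ((R + 1) ^ n - (R - 1) ^ n)) atTop (nhds 0) := by
  set A : ℝ → ℝ := fun z => ((1 + 2 * z) ^ 2) ^ s * (1 / (1 - 2 * z) ^ n) -
    ((1 - 2 * z) ^ 2) ^ s * (1 / (1 + 2 * z) ^ n) with hA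
  set B : ℝ → ℝ := fun z => (1 + z) ^ n - (1 - z) ^ n with hB
  have hAd : DifferentiableAt ℝ A 0 := by
    have h1 : DifferentiableAt ℝ (fun z : ℝ => (1 + 2 * z) ^ 2) 0 := by fun_prop
    have h2 : DifferentiableAt ℝ (fun z : ℝ => (1 - 2 * z) ^ 2) 0 := by fun_prop
    refine DifferentiableAt.sub (DifferentiableAt.mul (h1.rpow_const (Or.inl (by norm_num))) ?_)
      (DifferentiableAt.mul (h2.rpow_const (Or.inl (by norm_num))) ?_)
    · exact DifferentiableAt.div (by fun_prop) (by fun_prop) (by norm_num)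
    · exact DifferentiableAt.div (by fun_prop) (by fun_prop) (by norm_num)
  have hBd : DifferentiableAt ℝ B 0 := by fun_prop
  have hA0 : A =O[nhds 0] fun z => z := by
    have := hAd.isBigO_sub
    simpa [hA] using this
  have hB0 : B =O[nhds 0] fun z => z := by
    have := hBd.isBigO_sub
    simpa [hB] using this
  have hinv : Tendsto (fun R : ℝ => R⁻¹) atTop (nhds 0) := tendsto_inv_atTop_zero
  have hAB := ((hA0.mul hB0).comp_tendsto hinv)
  have h1 : (fun R : ℝ => (((R + 2) ^ 2) ^ s * (1 / (R - 2) ^ n) -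
      ((R - 2) ^ 2) ^ s * (1 / (R + 2) ^ n)) * ((R + 1) ^ n - (R - 1) ^ n)) =ᶠ[atTop]
      fun R => (R ^ 2) ^ s * (A R⁻¹ * B R⁻¹) := by
    filter_upwards [eventually_gt_atTop 2] with R hR
    have hR0 : 0 < R := by linarith
    have e1 : R + 2 = R * (1 + 2 * R⁻¹) := by field_simp
    have e2 : R - 2 = R * (1 - 2 * R⁻¹) := by field_simp
    have e3 : R + 1 = R * (1 + R⁻¹) := by field_simp
    have e4 : R - 1 = R * (1 - R⁻¹) := by field_simp
    rw [e1, e2, e3, e4]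
    simp only [hA, hB, mul_pow]
    rw [Real.mul_rpow (by positivity) (by positivity),
      Real.mul_rpow (by positivity) (by positivity)]
    have hRn : R ^ n ≠ 0 := by positivity
    simp only [one_div, mul_inv]
    field_simp
  refine Tendsto.congr' h1.symm ?_
  have h2 : (fun R : ℝ => (R ^ 2) ^ s * (A R⁻¹ * B R⁻¹)) =O[atTop]
      fun R : ℝ => (R ^ 2) ^ s * (R⁻¹ * R⁻¹) := (Asymptotics.isBigO_refl _ _).mul hAB
  refine h2.trans_tendsto ?_
  have h3 : (fun R : ℝ => (R ^ 2) ^ s * (R⁻¹ * R⁻¹)) =ᶠ[atTop] fun R => R ^ (-(2 - 2 * s)) := by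
    filter_upwards [eventually_gt_atTop 0] with R hR
    rw [← Real.rpow_natCast, ← Real.rpow_mul hR.le, ← Real.rpow_neg_one, ← Real.rpow_add hR,
      ← Real.rpow_add hR]
    congr 1; push_cast; ring
  exact (tendsto_rpow_neg_atTop (by linarith)).congr' h3.symm

theorem tendsto_recenter (n : ℕ) [NeZero n] {s : ℝ} (hs : s ∈ Ioo (0 : ℝ) 1)
    {b x : EuclideanSpace ℝ (Fin n)} (hb : ‖b‖ < 1) (hx : ‖x‖ < 1) :
    Tendsto (fun R : ℝ => (∫ v in closedBall x R, exteriorKernel n s b v) -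
      ∫ v in closedBall 0 R, exteriorKernel n s b v) atTop (nhds 0) := by
  set ω := (volume : Measure (EuclideanSpace ℝ (Fin n))).real (ball 0 1)
  have hlim := (tendsto_recenter_error n hs.2).mul_const ω
  rw [zero_mul] at hlim
  refine squeeze_zero_norm' ?_ hlim
  filter_upwards [eventually_gt_atTop 2] with R hR
  set g := exteriorKernel n s b with hg
  set D := ((R + 2) ^ 2) ^ s * (1 / (R - 2) ^ n) - ((R - 2) ^ 2) ^ s * (1 / (R + 2) ^ n) with hD
  have hgc : Continuous g := continuous_exteriorKernel n hs.1 hb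
  set c := ((R - 2) ^ 2) ^ s * (1 / (R + 2) ^ n) with hc
  have hbd : ∀ v, R - 1 ≤ ‖v‖ → ‖v‖ ≤ R + 1 → g v - c ∈ Icc 0 D := by
    intro v h1 h2
    have := exteriorKernel_mem_Icc n hs.1 hb hR h1 h2
    exact ⟨by linarith [this.1], by linarith [this.2]⟩
  have hInt : ∀ (z : EuclideanSpace ℝ (Fin n)), IntegrableOn g (closedBall z R) := fun z =>
    hgc.continuousOn.integrableOn_compact (isCompact_closedBall z R)
  have hInt' : ∀ (z : EuclideanSpace ℝ (Fin n)), IntegrableOn (fun v => g v - c) (closedBall z R) :=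
    fun z => (hgc.sub continuous_const).continuousOn.integrableOn_compact (isCompact_closedBall z R)
  have hvol : ∀ z : EuclideanSpace ℝ (Fin n), ∫ v in closedBall z R, c =
      ∫ v in closedBall (0 : EuclideanSpace ℝ (Fin n)) R, c := by
    intro z
    rw [setIntegral_const, setIntegral_const, Measure.real, Measure.real,
      Measure.addHaar_closedBall_center]
  have e1 : ∀ z : EuclideanSpace ℝ (Fin n), ∫ v in closedBall z R, (g v - c) =
      (∫ v in closedBall z R, g v) - ∫ v in closedBall (0 : EuclideanSpace ℝ (Fin n)) R, c := by
    intro z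
    rw [integral_sub (hInt z) (continuousOn_const.integrableOn_compact (isCompact_closedBall z R)),
      hvol z]
  have e2 : (∫ v in closedBall x R, g v) - ∫ v in closedBall 0 R, g v =
      ∫ v, ((closedBall x R).indicator (fun v => g v - c) v -
        (closedBall 0 R).indicator (fun v => g v - c) v) := by
    rw [integral_sub ((integrable_indicator_iff measurableSet_closedBall).2 (hInt' x))
      ((integrable_indicator_iff measurableSet_closedBall).2 (hInt' 0)),
      integral_indicator measurableSet_closedBall, integral_indicator measurableSet_closedBall,
      e1, e1]
    ring
  have hsub : ∀ v, ‖(closedBall x R).indicator (fun v => g v - c) v -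
        (closedBall 0 R).indicator (fun v => g v - c) v‖ ≤
        (closedBall (0 : EuclideanSpace ℝ (Fin n)) (R + 1) \ ball 0 (R - 1)).indicator
          (fun _ => D) v := by
    intro v
    have hD0 : 0 ≤ D := by
      obtain ⟨v0, hv0⟩ := NormedSpace.exists_lt_norm ℝ (EuclideanSpace ℝ (Fin n)) 0
      have := hbd ((R / ‖v0‖) • v0) (by
        rw [norm_smul, norm_div, norm_norm, div_mul_cancel₀ _ hv0.ne', Real.norm_eq_abs,
          abs_of_pos (by linarith)]; linarith) (by
        rw [norm_smul, norm_div, norm_norm, div_mul_cancel₀ _ hv0.ne', Real.norm_eq_abs,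
          abs_of_pos (by linarith)]; linarith)
      exact this.1.trans this.2
    have t1 : ‖v‖ ≤ ‖v - x‖ + ‖x‖ := by simpa using norm_add_le (v - x) x
    have t2 : ‖v - x‖ ≤ ‖v‖ + ‖x‖ := norm_sub_le v x
    by_cases hm : v ∈ closedBall (0 : EuclideanSpace ℝ (Fin n)) (R + 1) \ ball 0 (R - 1)
    · rw [indicator_of_mem hm]
      have hm' : ‖v‖ ≤ R + 1 ∧ R - 1 ≤ ‖v‖ := by simpa using hm
      have hb := hbd v hm'.2 hm'.1
      by_cases a1 : v ∈ closedBall x R <;> by_cases a2 : v ∈ closedBall (0 : EuclideanSpace ℝ (Fin n)) R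
      · simpa [indicator_of_mem a1, indicator_of_mem a2] using hD0
      · simp only [indicator_of_mem a1, indicator_of_notMem a2, sub_zero, Real.norm_eq_abs]
        rw [abs_of_nonneg hb.1]; exact hb.2
      · simp only [indicator_of_notMem a1, indicator_of_mem a2, zero_sub, norm_neg, Real.norm_eq_abs]
        rw [abs_of_nonneg hb.1]; exact hb.2
      · simpa [indicator_of_notMem a1, indicator_of_notMem a2] using hD0
    · rw [indicator_of_notMem hm]
      have hm' : ¬ (‖v‖ ≤ R + 1 ∧ R - 1 ≤ ‖v‖) := by simpa using hm
      have : (v ∈ closedBall x R) ↔ v ∈ closedBall (0 : EuclideanSpace ℝ (Fin n)) R := by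
        rw [mem_closedBall, mem_closedBall, dist_eq_norm, dist_zero_right]
        constructor
        · intro h
          by_contra h'
          exact hm' ⟨by linarith, by linarith⟩
        · intro h
          by_contra h'
          exact hm' ⟨by linarith, by linarith⟩
      by_cases a2 : v ∈ closedBall (0 : EuclideanSpace ℝ (Fin n)) R
      · simp [indicator_of_mem a2, indicator_of_mem (this.2 a2)]
      · simp [indicator_of_notMem a2, indicator_of_notMem (fun h => a2 (this.1 h))]
  have hmA : MeasurableSet (closedBall (0 : EuclideanSpace ℝ (Fin n)) (R + 1) \ ball 0 (R - 1)) :=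
    measurableSet_closedBall.diff measurableSet_ball
  rw [e2]
  refine (norm_integral_le_of_norm_le ?_ (Eventually.of_forall hsub)).trans ?_
  · rw [integrable_indicator_iff hmA]
    exact integrableOn_const ((measure_mono sdiff_subset).trans_lt measure_closedBall_lt_top).ne
  · have v1 : volume.real (closedBall (0 : EuclideanSpace ℝ (Fin n)) (R + 1)) = (R + 1) ^ n * ω := by
      rw [Measure.real, Measure.addHaar_closedBall _ _ (by linarith), finrank_euclideanSpace_fin,
        ENNReal.toReal_mul, ENNReal.toReal_ofReal (pow_nonneg (by linarith) _)]
      rfl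
    have v2 : volume.real (ball (0 : EuclideanSpace ℝ (Fin n)) (R - 1)) = (R - 1) ^ n * ω := by
      rw [Measure.real, Measure.addHaar_ball _ _ (by linarith), finrank_euclideanSpace_fin,
        ENNReal.toReal_mul, ENNReal.toReal_ofReal (pow_nonneg (by linarith) _)]
      rfl
    rw [integral_indicator hmA, setIntegral_const, measureReal_sdiff
      (ball_subset_closedBall.trans (closedBall_subset_closedBall (by linarith))) measurableSet_ball
      (h₁ := measure_closedBall_lt_top.ne), v1, v2, smul_eq_mul]
    apply le_of_eq
    ring

theorem tendsto_rpow_sub_sq_sub_one {s : ℝ} (hs : s ∈ Ioo (0 : ℝ) 1) :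
    Tendsto (fun R : ℝ => R ^ (2 * s) - (R ^ 2 - 1) ^ s) atTop (nhds 0) := by
  have hAd : DifferentiableAt ℝ (fun z : ℝ => 1 - (1 - z) ^ s) 0 := by
    refine DifferentiableAt.sub (by fun_prop) (DifferentiableAt.rpow_const (by fun_prop) (Or.inl ?_))
    norm_num
  have hA0 : (fun z : ℝ => 1 - (1 - z) ^ s) =O[nhds 0] fun z => z := by
    have := hAd.isBigO_sub
    simpa using this
  have hinv : Tendsto (fun R : ℝ => (R ^ 2)⁻¹) atTop (nhds 0) :=
    tendsto_inv_atTop_zero.comp (tendsto_pow_atTop two_ne_zero)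
  have hAB := hA0.comp_tendsto hinv
  have h1 : (fun R : ℝ => R ^ (2 * s) - (R ^ 2 - 1) ^ s) =ᶠ[atTop]
      fun R => R ^ (2 * s) * (1 - (1 - (R ^ 2)⁻¹) ^ s) := by
    filter_upwards [eventually_gt_atTop 1] with R hR
    have hR0 : 0 < R := by linarith
    have e1 : R ^ 2 - 1 = R ^ 2 * (1 - (R ^ 2)⁻¹) := by field_simp
    have : 0 ≤ 1 - (R ^ 2)⁻¹ := by
      have : (R ^ 2)⁻¹ ≤ 1 := inv_le_one_of_one_le₀ (by nlinarith)
      linarith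
    rw [e1, Real.mul_rpow (by positivity) this, ← Real.rpow_natCast, ← Real.rpow_mul hR0.le]
    push_cast
    ring
  refine Tendsto.congr' h1.symm ?_
  have h2 : (fun R : ℝ => R ^ (2 * s) * (1 - (1 - (R ^ 2)⁻¹) ^ s)) =O[atTop]
      fun R : ℝ => R ^ (2 * s) * (R ^ 2)⁻¹ := (Asymptotics.isBigO_refl _ _).mul hAB
  refine h2.trans_tendsto ?_
  have h3 : (fun R : ℝ => R ^ (2 * s) * (R ^ 2)⁻¹) =ᶠ[atTop] fun R => R ^ (-(2 - 2 * s)) := by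
    filter_upwards [eventually_gt_atTop 0] with R hR
    rw [← Real.rpow_natCast, ← Real.rpow_neg hR.le, ← Real.rpow_add hR]
    congr 1; push_cast; ring
  exact (tendsto_rpow_neg_atTop (by linarith [hs.2])).congr' h3.symm

/-- The renormalized mass of the exterior kernel on large balls. -/
theorem tendsto_sub_integral_exteriorKernel (n : ℕ) [NeZero n] {s : ℝ} (hs : s ∈ Ioo (0 : ℝ) 1)
    {b x : EuclideanSpace ℝ (Fin n)} (hb : ‖b‖ < 1) (hx : ‖x‖ < 1) :
    Tendsto (fun R : ℝ => sphereMass n * (R ^ (2 * s) / (2 * s)) -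
      ∫ v in closedBall x R, exteriorKernel n s b v) atTop
      (nhds (sphereMass n / 2 * ((1 - ‖b‖ ^ 2) ^ s * (Real.Gamma s * Real.Gamma (1 - s))))) := by
  have hγ : 0 < 1 - ‖b‖ ^ 2 := by nlinarith [norm_nonneg b]
  have hlim : Tendsto (fun R : ℝ => R ^ 2 - 1) atTop atTop :=
    tendsto_atTop_add_const_right _ _ (tendsto_pow_atTop two_ne_zero)
  have h1 := intervalIntegral_tendsto_integral_Ioi 0 (integrableOn_rpow_div_add hs hγ) hlim
  rw [integral_rpow_div_add hs hγ] at h1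
  have h2 := ((tendsto_rpow_sub_sq_sub_one hs).const_mul (sphereMass n / (2 * s))).add
    ((h1.const_mul (sphereMass n / 2)).sub (tendsto_recenter n hs hb hx))
  simp only [mul_zero, sub_zero, zero_add] at h2
  refine h2.congr' ?_
  filter_upwards [eventually_gt_atTop 1] with R hR
  rw [integral_exteriorKernel_closedBall n hs b hb hR]
  have := hs.1.ne'
  field_simp
  ring

/-- The kernel `(1 - |x|²)₊^s / |x - b|ⁿ`, whose fractional Laplacian in the ball is explicit. -/
noncomputable def ballKernel (n : ℕ) (s : ℝ) (b x : EuclideanSpace ℝ (Fin n)) : ℝ :=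
  max (1 - ‖x‖ ^ 2) 0 ^ s * (1 / ‖x - b‖ ^ n)

theorem continuous_ballKernel (n : ℕ) {s : ℝ} (hs : 0 < s) {b : EuclideanSpace ℝ (Fin n)}
    (hb : 1 < ‖b‖) : Continuous (ballKernel n s b) := by
  rw [continuous_iff_continuousAt]
  intro v
  by_cases hv : v = b
  · subst hv
    have : (ballKernel n s v) =ᶠ[nhds v] fun _ => 0 := by
      have h : ∀ᶠ w in nhds v, 1 < ‖w‖ := continuous_norm.continuousAt.eventually_const_lt hb
      filter_upwards [h] with w hw
      rw [ballKernel, max_eq_right (by nlinarith [norm_nonneg w]), Real.zero_rpow hs.ne',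
        zero_mul]
    exact continuousAt_const.congr this.symm
  · have h0 : ‖v - b‖ ^ n ≠ 0 := pow_ne_zero _ (norm_ne_zero_iff.2 (sub_ne_zero.2 hv))
    unfold ballKernel
    refine ContinuousAt.mul ?_ ?_
    · exact ContinuousAt.rpow_const (by fun_prop) (Or.inr hs.le)
    · exact ContinuousAt.div (by fun_prop) (by fun_prop) h0

theorem ballKernel_eq_zero (n : ℕ) {s : ℝ} (hs : 0 < s) (b : EuclideanSpace ℝ (Fin n))
    {x : EuclideanSpace ℝ (Fin n)} (hx : x ∉ ball (0 : EuclideanSpace ℝ (Fin n)) 1) :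
    ballKernel n s b x = 0 := by
  have hx' : 1 ≤ ‖x‖ := by simpa using hx
  rw [ballKernel, max_eq_right (by nlinarith), Real.zero_rpow hs.ne', zero_mul]

/-- The point conjugate to `b` with respect to the inversion centered at `x` of power
`‖x‖² - 1`. -/
noncomputable def conjPoint {n : ℕ} (x b : EuclideanSpace ℝ (Fin n)) : EuclideanSpace ℝ (Fin n) :=
  x + ((1 - ‖x‖ ^ 2) / ‖x - b‖ ^ 2) • (x - b)

theorem one_sub_norm_conjPoint_sq {n : ℕ} {x b : EuclideanSpace ℝ (Fin n)} (hxb : x ≠ b) :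
    1 - ‖conjPoint x b‖ ^ 2 = (1 - ‖x‖ ^ 2) * (‖b‖ ^ 2 - 1) / ‖x - b‖ ^ 2 := by
  have hd : ‖x - b‖ ≠ 0 := norm_ne_zero_iff.2 (sub_ne_zero.2 hxb)
  have hb : ‖b‖ ^ 2 = ‖x‖ ^ 2 - 2 * ⟪x, x - b⟫ + ‖x - b‖ ^ 2 := by
    have := norm_sub_sq_real x (x - b)
    rwa [sub_sub_cancel] at this
  rw [conjPoint, norm_add_sq_real, real_inner_smul_right, norm_smul, hb, mul_pow, Real.norm_eq_abs,
    sq_abs]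
  field_simp
  ring

theorem one_sub_norm_add_inversion_sq {n : ℕ} (x : EuclideanSpace ℝ (Fin n))
    {w : EuclideanSpace ℝ (Fin n)} (hw : w ≠ 0) :
    1 - ‖x + (-(1 - ‖x‖ ^ 2) / ‖w‖ ^ 2) • w‖ ^ 2 =
      (1 - ‖x‖ ^ 2) / ‖w‖ ^ 2 * (‖x + w‖ ^ 2 - 1) := by
  have hd : ‖w‖ ≠ 0 := norm_ne_zero_iff.2 hw
  rw [norm_add_sq_real, norm_add_sq_real, real_inner_smul_right, norm_smul, mul_pow,
    Real.norm_eq_abs, sq_abs]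
  field_simp
  ring

theorem norm_add_inversion_sub {n : ℕ} {x b : EuclideanSpace ℝ (Fin n)} (hxb : x ≠ b)
    {w : EuclideanSpace ℝ (Fin n)} (hw : w ≠ 0) :
    ‖x + (-(1 - ‖x‖ ^ 2) / ‖w‖ ^ 2) • w - b‖ = ‖x - b‖ / ‖w‖ * ‖x + w - conjPoint x b‖ := by
  have hd : ‖x - b‖ ≠ 0 := norm_ne_zero_iff.2 (sub_ne_zero.2 hxb)
  have hw' : ‖w‖ ≠ 0 := norm_ne_zero_iff.2 hw
  rw [← sq_eq_sq₀ (norm_nonneg _) (by positivity), mul_pow, conjPoint, add_sub_add_left_eq_sub,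
    add_sub_right_comm]
  generalize x - b = d at hd ⊢
  rw [norm_add_sq_real, norm_sub_sq_real, real_inner_smul_right,
    real_inner_smul_right, norm_smul, norm_smul, mul_pow, mul_pow,
    Real.norm_eq_abs, Real.norm_eq_abs, sq_abs, sq_abs, real_inner_comm w d]
  field_simp
  ring

theorem integral_ballKernel_tail (n : ℕ) [NeZero n] {s ρ : ℝ} (hρ : 0 < ρ)
    {b x : EuclideanSpace ℝ (Fin n)} (hx : ‖x‖ < 1) (hxb : x ≠ b) :
    ∫ y in {y : EuclideanSpace ℝ (Fin n) | ρ ≤ ‖y‖},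
        ballKernel n s b (x + y) / ‖y‖ ^ ((n : ℝ) + 2 * s) =
      ((1 - ‖x‖ ^ 2) ^ (-s) * (1 / ‖x - b‖ ^ n)) *
        ∫ v in closedBall x ((1 - ‖x‖ ^ 2) / ρ), exteriorKernel n s (conjPoint x b) v := by
  set k := 1 - ‖x‖ ^ 2 with hkdef
  have hk : 0 < k := by nlinarith [norm_nonneg x]
  have hm : MeasurableSet {y : EuclideanSpace ℝ (Fin n) | ρ ≤ ‖y‖} :=
    measurableSet_le measurable_const measurable_norm
  rw [← integral_indicator hm, ← integral_indicator measurableSet_closedBall,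
    integral_comp_inversion n (neg_ne_zero.2 hk.ne'), ← integral_const_mul,
    ← integral_add_left_eq_self (fun v => _ * (closedBall x (k / ρ)).indicator _ v) x]
  refine integral_congr_ae ?_
  have hne : ∀ᵐ w : EuclideanSpace ℝ (Fin n), w ≠ 0 := by
    simp [ae_iff, measure_singleton]
  filter_upwards [hne] with w hw
  have hw' : 0 < ‖w‖ := norm_pos_iff.2 hw
  have hd : 0 < ‖x - b‖ := norm_pos_iff.2 (sub_ne_zero.2 hxb)
  have hnorm : ‖(-k / ‖w‖ ^ 2) • w‖ = k / ‖w‖ := by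
    rw [norm_smul, norm_div, norm_neg, norm_pow, norm_norm, Real.norm_eq_abs, abs_of_pos hk]
    field_simp
  have hiff : ((-k / ‖w‖ ^ 2) • w ∈ {y : EuclideanSpace ℝ (Fin n) | ρ ≤ ‖y‖}) ↔
      x + w ∈ closedBall x (k / ρ) := by
    rw [mem_ofPred_eq, hnorm, mem_closedBall, dist_eq_norm, add_sub_cancel_left, le_div_iff₀ hw',
      le_div_iff₀ hρ, mul_comm]
  by_cases hin : x + w ∈ closedBall x (k / ρ)
  · rw [indicator_of_mem (hiff.2 hin), indicator_of_mem hin, hnorm, ballKernel, exteriorKernel,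
      one_sub_norm_add_inversion_sq x hw, norm_add_inversion_sub hxb hw, ← hkdef]
    have hmax : max (k / ‖w‖ ^ 2 * (‖x + w‖ ^ 2 - 1)) 0 =
        k / ‖w‖ ^ 2 * max (‖x + w‖ ^ 2 - 1) 0 := by
      rw [mul_max_of_nonneg _ _ (by positivity), mul_zero]
    rw [hmax, Real.mul_rpow (by positivity) (le_max_right _ _), abs_neg, abs_of_pos hk,
      Real.div_rpow hk.le hw'.le, Real.div_rpow hk.le (by positivity), Real.rpow_add hk,
      Real.rpow_add hw', Real.rpow_natCast, Real.rpow_natCast, Real.rpow_neg hk.le,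
      two_mul s, Real.rpow_add hk, Real.rpow_add hw', sq ‖w‖, Real.mul_rpow hw'.le hw'.le, mul_pow,
      div_pow, two_mul n, pow_add]
    have h1 : k ^ s ≠ 0 := (Real.rpow_pos_of_pos hk s).ne'
    have h2 : ‖w‖ ^ s ≠ 0 := (Real.rpow_pos_of_pos hw' s).ne'
    simp only [one_div, mul_inv, inv_div]
    field_simp
  · rw [indicator_of_notMem (fun h => hin (hiff.1 h)), indicator_of_notMem hin, mul_zero, mul_zero]

/-- Functions that are continuous and bounded are integrable against the tail kernel. -/
theorem integrableOn_mul_tail (n : ℕ) [NeZero n] {s ρ : ℝ} (hs : 0 < s) (hρ : 0 < ρ)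
    {u : EuclideanSpace ℝ (Fin n) → ℝ} (hu : Continuous u) {M : ℝ} (hM : ∀ x, |u x| ≤ M) :
    IntegrableOn (fun y => u y / ‖y‖ ^ ((n : ℝ) + 2 * s))
      {y : EuclideanSpace ℝ (Fin n) | ρ ≤ ‖y‖} := by
  have h := Integrable.bdd_mul (integrableOn_norm_rpow_tail n hs hρ) (f := u) (c := M)
    hu.aestronglyMeasurable (Eventually.of_forall hM)
  refine h.congr (Eventually.of_forall fun y => ?_)
  simp [div_eq_mul_inv]

theorem exists_bound_of_continuous_of_eq_zero {n : ℕ} {u : EuclideanSpace ℝ (Fin n) → ℝ}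
    (hu : Continuous u) (h0 : ∀ z ∉ ball (0 : EuclideanSpace ℝ (Fin n)) 1, u z = 0) :
    ∃ M, ∀ x, |u x| ≤ M := by
  have hc : HasCompactSupport u := HasCompactSupport.intro (isCompact_closedBall 0 1)
    fun z hz => h0 z fun h => hz (ball_subset_closedBall h)
  exact hu.bounded_above_of_compact_support hc

/-- The fractional Laplacian of `ballKernel` in the unit ball. -/
noncomputable def ballKernelLap (n : ℕ) (s : ℝ) (b x : EuclideanSpace ℝ (Fin n)) : ℝ :=
  fracC n s * (sphereMass n / 2 * (Real.Gamma s * Real.Gamma (1 - s))) *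
    ((‖b‖ ^ 2 - 1) ^ s * (1 / ‖x - b‖ ^ ((n : ℝ) + 2 * s)))

theorem hasFracLap_ballKernel (n : ℕ) [NeZero n] {s : ℝ} (hs : s ∈ Ioo (0 : ℝ) 1)
    {b x : EuclideanSpace ℝ (Fin n)} (hb : 1 < ‖b‖) (hx : x ∈ ball (0 : EuclideanSpace ℝ (Fin n)) 1) :
    HasFracLap n s (ballKernel n s b) x (ballKernelLap n s b x) := by
  have hx : ‖x‖ < 1 := by simpa using hx
  have hxb : x ≠ b := by rintro rfl; linarith
  have hd : 0 < ‖x - b‖ := norm_pos_iff.2 (sub_ne_zero.2 hxb)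
  have hk : 0 < 1 - ‖x‖ ^ 2 := by nlinarith [norm_nonneg x]
  have hβ : 0 < ‖b‖ ^ 2 - 1 := by nlinarith [norm_nonneg b]
  have hconj := one_sub_norm_conjPoint_sq hxb
  have hb' : ‖conjPoint x b‖ < 1 := by
    have : 0 < 1 - ‖conjPoint x b‖ ^ 2 := by rw [hconj]; positivity
    nlinarith [norm_nonneg (conjPoint x b)]
  have hR : Tendsto (fun ρ : ℝ => (1 - ‖x‖ ^ 2) / ρ) (nhdsWithin 0 (Ioi 0)) atTop := by
    simp only [div_eq_mul_inv]
    exact tendsto_inv_nhdsGT_zero.const_mul_atTop hk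
  have hlim := (((tendsto_sub_integral_exteriorKernel n hs hb' hx).comp hR).const_mul
    ((1 - ‖x‖ ^ 2) ^ (-s) * (1 / ‖x - b‖ ^ n))).const_mul (fracC n s)
  unfold HasFracLap
  convert hlim.congr' ?_ using 2
  · rw [hconj, ballKernelLap, Real.div_rpow (by positivity) (by positivity),
      Real.mul_rpow hk.le hβ.le, Real.rpow_neg hk.le, Real.rpow_add hd, Real.rpow_natCast,
      ← Real.rpow_natCast ‖x - b‖ 2, ← Real.rpow_mul hd.le]
    have h1 : (1 - ‖x‖ ^ 2) ^ s ≠ 0 := (Real.rpow_pos_of_pos hk s).ne'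
    push_cast
    field_simp
  · filter_upwards [self_mem_nhdsWithin] with ρ hρ
    have hρ : 0 < ρ := hρ
    have hc := continuous_ballKernel n hs.1 hb
    obtain ⟨M, hM⟩ := exists_bound_of_continuous_of_eq_zero hc
      (fun z hz => ballKernel_eq_zero n hs.1 b hz)
    have i1 := integrableOn_mul_tail n hs.1 hρ (u := fun y => ballKernel n s b (x + y))
      (by fun_prop) (M := M) (fun y => hM _)
    have i2 := integrableOn_mul_tail n hs.1 hρ (u := fun _ => ballKernel n s b x)
      (by fun_prop) (M := M) (fun y => hM _)
    simp only [sub_div (ballKernel n s b x), Function.comp]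
    rw [integral_sub i2 i1, integral_ballKernel_tail n hρ hx hxb]
    simp only [div_eq_mul_one_div (ballKernel n s b x)]
    rw [integral_const_mul, integral_norm_rpow_tail n hs.1 hρ, ballKernel, max_eq_left hk.le,
      Real.div_rpow hk.le hρ.le, two_mul, Real.rpow_add hk, Real.rpow_neg hk.le,
      Real.rpow_neg hρ.le]
    have h1 : (1 - ‖x‖ ^ 2) ^ s ≠ 0 := (Real.rpow_pos_of_pos hk s).ne'
    have h2 := hs.1.ne'
    field_simp

theorem integral_boundary_profile (n : ℕ) [NeZero n] {s : ℝ} (hs : 0 < s) :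
    ∫ p in Ioi (1 : ℝ), (1 - 1 / p) ^ s * p ^ (-((n : ℝ) / 2)) * (1 / (p - 1)) =
      Real.Gamma ((n : ℝ) / 2) * Real.Gamma s / Real.Gamma ((n : ℝ) / 2 + s) := by
  have hn : 0 < (n : ℝ) / 2 := by
    have : 0 < (n : ℝ) := Nat.cast_pos.2 (NeZero.pos n)
    positivity
  rw [← integral_beta hn hs, ← integral_indicator measurableSet_Ioi,
    ← setIntegral_eq_integral_of_forall_compl_eq_zero (s := Ioi (0 : ℝ)) (by
      intro x hx
      rw [indicator_of_notMem]
      intro h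
      exact hx (lt_trans one_pos (mem_Ioi.1 h))),
    ← integral_comp_rpow_Ioi _ (p := -1) (by norm_num),
    ← integral_indicator measurableSet_Ioi, ← integral_indicator measurableSet_Ioo]
  refine integral_congr_ae ?_
  have h1 : ∀ᵐ q : ℝ, q ≠ 1 := by simp [ae_iff, measure_singleton]
  filter_upwards [h1] with q hq1
  by_cases hq : 0 < q
  · rw [indicator_of_mem (mem_Ioi.2 hq)]
    rw [Real.rpow_neg_one]
    by_cases hq2 : q < 1
    · have hq' : 0 < 1 - q := by linarith
      rw [indicator_of_mem (show q⁻¹ ∈ Ioi (1 : ℝ) from (one_lt_inv₀ hq).2 hq2),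
        indicator_of_mem (show q ∈ Ioo (0 : ℝ) 1 from ⟨hq, hq2⟩), Real.inv_rpow hq.le,
        Real.rpow_neg hq.le, inv_inv, one_div, inv_inv, Real.rpow_sub hq, Real.rpow_sub hq',
        Real.rpow_sub hq, Real.rpow_one, Real.rpow_one, Real.rpow_neg_one]
      have : (1 : ℝ) / (q⁻¹ - 1) = q / (1 - q) := by field_simp
      rw [this, smul_eq_mul, abs_neg, abs_one]
      field_simp
    · rw [indicator_of_notMem (show q⁻¹ ∉ Ioi (1 : ℝ) from fun h => hq2 ((one_lt_inv₀ hq).1 h)),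
        indicator_of_notMem (show q ∉ Ioo (0 : ℝ) 1 from fun h => hq2 h.2), smul_zero]
  · rw [indicator_of_notMem (show q ∉ Ioi (0 : ℝ) from hq),
      indicator_of_notMem (show q ∉ Ioo (0 : ℝ) 1 from fun h => hq h.1)]

theorem integral_ballKernel_boundary (n : ℕ) [NeZero n] {s : ℝ} (hs : 0 < s)
    {e : EuclideanSpace ℝ (Fin n)} (he : ‖e‖ = 1) :
    ∫ z, ballKernel n s e z = sphereMass n / 2 *
      (Real.Gamma ((n : ℝ) / 2) * Real.Gamma s / Real.Gamma ((n : ℝ) / 2 + s)) := by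
  set F : ℝ → ℝ := (Ioi (1 : ℝ)).indicator fun p => (1 - 1 / p) ^ s * p ^ (-((n : ℝ) / 2)) with hF
  have hFm : Measurable F := by
    refine Measurable.indicator ?_ measurableSet_Ioi
    fun_prop
  have hFn : ∀ p, 0 ≤ F p := by
    intro p
    refine indicator_nonneg (fun p hp => ?_) p
    have hp : 1 < p := hp
    have : 1 / p ≤ 1 := (div_le_one (by linarith)).2 hp.le
    exact mul_nonneg (Real.rpow_nonneg (by linarith) _) (Real.rpow_nonneg (by linarith) _)
  have key := integral_radial_kernel n F hFm hFn e (by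
    intro p hp
    rw [he, one_pow] at hp
    exact indicator_of_notMem (not_lt.2 hp) _)
  rw [he, one_pow] at key
  have h2 : ∫ p in Ioi (1 : ℝ), F p * (1 / (p - 1)) =
      ∫ p in Ioi (1 : ℝ), (1 - 1 / p) ^ s * p ^ (-((n : ℝ) / 2)) * (1 / (p - 1)) := by
    refine setIntegral_congr_fun measurableSet_Ioi fun p hp => ?_
    simp only [hF]
    rw [indicator_of_mem hp]
  rw [h2, integral_boundary_profile n hs] at key
  rw [← key, integral_comp_inversion n one_ne_zero]
  refine integral_congr_ae ?_
  have hne : ∀ᵐ w : EuclideanSpace ℝ (Fin n), w ≠ 0 := by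
    simp [ae_iff, measure_singleton]
  filter_upwards [hne] with w hw
  have hw' : 0 < ‖w‖ := norm_pos_iff.2 hw
  have hnorm : ‖(1 / ‖w‖ ^ 2) • w‖ ^ 2 = 1 / ‖w‖ ^ 2 := by
    rw [norm_smul, norm_div, norm_pow, norm_norm, norm_one]
    field_simp
  have hdist : ‖(1 / ‖w‖ ^ 2) • w - e‖ = ‖w - e‖ / ‖w‖ := by
    rw [← sq_eq_sq₀ (norm_nonneg _) (by positivity), norm_sub_sq_real, div_pow, norm_sub_sq_real,
      hnorm, real_inner_smul_left, he]
    field_simp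
    ring
  rw [ballKernel, hnorm, hdist, hF]
  by_cases h1 : 1 < ‖w‖ ^ 2
  · have h3 : 0 ≤ 1 - 1 / ‖w‖ ^ 2 := by
      have : 1 / ‖w‖ ^ 2 ≤ 1 := (div_le_one (by positivity)).2 h1.le
      linarith
    have h4 : (‖w‖ ^ 2) ^ (-((n : ℝ) / 2)) = 1 / ‖w‖ ^ n := by
      rw [← Real.rpow_natCast ‖w‖ 2, ← Real.rpow_mul hw'.le, ← Real.rpow_natCast ‖w‖ n, one_div,
        ← Real.rpow_neg hw'.le]
      congr 1
      push_cast
      ring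
    rw [indicator_of_mem (mem_Ioi.2 h1), max_eq_left h3, h4, abs_one, one_pow, div_pow, two_mul,
      pow_add]
    simp only [one_div, inv_div]
    field_simp
  · have h3 : 1 - 1 / ‖w‖ ^ 2 ≤ 0 := by
      have : 1 ≤ 1 / ‖w‖ ^ 2 := (one_le_div (by positivity)).2 (not_lt.1 h1)
      linarith
    rw [indicator_of_notMem (fun h => h1 (mem_Ioi.1 h)), max_eq_right h3, Real.zero_rpow hs.ne']
    ring

theorem integral_ballKernel_boundary_pos (n : ℕ) [NeZero n] {s : ℝ} (hs : 0 < s)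
    {e : EuclideanSpace ℝ (Fin n)} (he : ‖e‖ = 1) : 0 < ∫ z, ballKernel n s e z := by
  have hn : 0 < (n : ℝ) / 2 := by
    have : 0 < (n : ℝ) := Nat.cast_pos.2 (NeZero.pos n)
    positivity
  rw [integral_ballKernel_boundary n hs he]
  have h1 := Real.Gamma_pos_of_pos hn
  have h2 := Real.Gamma_pos_of_pos hs
  have h3 := Real.Gamma_pos_of_pos (add_pos hn hs)
  have h4 := sphereMass_pos n
  positivity

theorem integrable_ballKernel_boundary (n : ℕ) [NeZero n] {s : ℝ} (hs : 0 < s)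
    {e : EuclideanSpace ℝ (Fin n)} (he : ‖e‖ = 1) : Integrable (ballKernel n s e) :=
  Integrable.of_integral_ne_zero (integral_ballKernel_boundary_pos n hs he).ne'

theorem integral_mul_ballKernel_boundary (n : ℕ) [NeZero n] {s : ℝ} (hs : 0 < s)
    {e b : EuclideanSpace ℝ (Fin n)} (he : ‖e‖ = 1) (hb : 1 < ‖b‖) :
    ∫ z, (‖b‖ ^ 2 - 1) ^ s * (1 / ‖z - b‖ ^ ((n : ℝ) + 2 * s)) * ballKernel n s e z =
      1 / ‖e - b‖ ^ n * ∫ z, ballKernel n s e z := by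
  have hbe : b ≠ e := by rintro rfl; linarith
  have hd : 0 < ‖b - e‖ := norm_pos_iff.2 (sub_ne_zero.2 hbe)
  have hk : 0 < ‖b‖ ^ 2 - 1 := by nlinarith
  have hconj := one_sub_norm_conjPoint_sq hbe
  have he' : ‖conjPoint b e‖ = 1 := by
    rw [he, one_pow, sub_self, mul_zero, zero_div, sub_eq_zero] at hconj
    exact (pow_eq_one_iff_of_nonneg (norm_nonneg _) two_ne_zero).1 hconj.symm
  have hswap : ∫ z, ballKernel n s e z = ∫ z, ballKernel n s (conjPoint b e) z := by
    rw [integral_ballKernel_boundary n hs he, integral_ballKernel_boundary n hs he']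
  rw [hswap, ← integral_const_mul, ← integral_add_left_eq_self _ b,
    integral_comp_inversion n hk.ne',
    ← integral_add_left_eq_self (fun v => _ * ballKernel n s (conjPoint b e) v) b]
  refine integral_congr_ae ?_
  have hne : ∀ᵐ w : EuclideanSpace ℝ (Fin n), w ≠ 0 := by
    simp [ae_iff, measure_singleton]
  filter_upwards [hne] with w hw
  have hw' : 0 < ‖w‖ := norm_pos_iff.2 hw
  have e1 := one_sub_norm_add_inversion_sq b hw
  have e2 := norm_add_inversion_sub hbe hw
  rw [neg_sub] at e1 e2
  set k := ‖b‖ ^ 2 - 1 with hkdef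
  have hnorm : ‖(k / ‖w‖ ^ 2) • w‖ = k / ‖w‖ := by
    rw [norm_smul, norm_div, norm_pow, norm_norm, Real.norm_eq_abs, abs_of_pos hk]
    field_simp
  have e3 : 1 - ‖b + (k / ‖w‖ ^ 2) • w‖ ^ 2 = k / ‖w‖ ^ 2 * (1 - ‖b + w‖ ^ 2) := by
    rw [e1]; ring
  have hmax : max (k / ‖w‖ ^ 2 * (1 - ‖b + w‖ ^ 2)) 0 =
      k / ‖w‖ ^ 2 * max (1 - ‖b + w‖ ^ 2) 0 := by
    rw [mul_max_of_nonneg _ _ (by positivity), mul_zero]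
  rw [add_sub_cancel_left, ballKernel, ballKernel, e3, e2, hnorm, hmax,
    Real.mul_rpow (by positivity) (le_max_right _ _), abs_of_pos hk, norm_sub_rev e b,
    Real.div_rpow hk.le hw'.le, Real.div_rpow hk.le (by positivity), Real.rpow_add hk,
    Real.rpow_add hw', Real.rpow_natCast, Real.rpow_natCast,
    two_mul s, Real.rpow_add hk, Real.rpow_add hw', sq ‖w‖, Real.mul_rpow hw'.le hw'.le, mul_pow,
    div_pow, two_mul n, pow_add]
  have h1 : k ^ s ≠ 0 := (Real.rpow_pos_of_pos hk s).ne'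
  have h2 : ‖w‖ ^ s ≠ 0 := (Real.rpow_pos_of_pos hw' s).ne'
  simp only [one_div, mul_inv, inv_div]
  field_simp

/-- The boundary trace of `ballKernel` is reproduced by its fractional Laplacian. -/
theorem kappaC_mul_integral_ballKernelLap (n : ℕ) [NeZero n] {s : ℝ} (hs : s ∈ Ioo (0 : ℝ) 1)
    {e b : EuclideanSpace ℝ (Fin n)} (he : ‖e‖ = 1) (hb : 1 < ‖b‖) :
    kappaC n s / s * ∫ z, ballKernelLap n s b z * ballKernel n s e z = 1 / ‖e - b‖ ^ n := by
  have hn : 0 < (n : ℝ) / 2 := by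
    have : 0 < (n : ℝ) := Nat.cast_pos.2 (NeZero.pos n)
    positivity
  have h1 := (Real.Gamma_pos_of_pos hn).ne'
  have h2 := (Real.Gamma_pos_of_pos hs.1).ne'
  have h3 := (Real.Gamma_pos_of_pos (add_pos hn hs.1)).ne'
  have h4 := (Real.Gamma_pos_of_pos (sub_pos.2 hs.2)).ne'
  have h5 : (4 : ℝ) ^ s ≠ 0 := (Real.rpow_pos_of_pos (by norm_num) s).ne'
  have h6 : Real.pi ^ ((n : ℝ) / 2) ≠ 0 := (Real.rpow_pos_of_pos Real.pi_pos _).ne'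
  have h7 := hs.1.ne'
  have : ∀ z, ballKernelLap n s b z * ballKernel n s e z =
      fracC n s * (sphereMass n / 2 * (Real.Gamma s * Real.Gamma (1 - s))) *
        ((‖b‖ ^ 2 - 1) ^ s * (1 / ‖z - b‖ ^ ((n : ℝ) + 2 * s)) * ballKernel n s e z) := by
    intro z
    rw [ballKernelLap]; ring
  simp only [this]
  rw [integral_const_mul, integral_mul_ballKernel_boundary n hs.1 he hb,
    integral_ballKernel_boundary n hs.1 he, sphereMass_eq, fracC, kappaC]
  generalize Real.Gamma ((n : ℝ) / 2 + s) = G at h3 ⊢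
  field_simp

/-- Functions that are uniform limits, on the set `K`, of elements of the subspace `V`. -/
def unifClosure {X : Type*} (K : Set X) (V : Submodule ℝ (X → ℝ)) : Submodule ℝ (X → ℝ) where
  carrier := {f | ∀ ε > 0, ∃ g ∈ V, ∀ x ∈ K, |f x - g x| ≤ ε}
  zero_mem' := fun ε hε => ⟨0, V.zero_mem, fun x _ => by simpa using hε.le⟩
  add_mem' := by
    intro f₁ f₂ h₁ h₂ ε hε
    obtain ⟨g₁, m₁, k₁⟩ := h₁ (ε / 2) (by positivity)
    obtain ⟨g₂, m₂, k₂⟩ := h₂ (ε / 2) (by positivity)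
    refine ⟨g₁ + g₂, V.add_mem m₁ m₂, fun x hx => ?_⟩
    have e : (f₁ + f₂) x - (g₁ + g₂) x = (f₁ x - g₁ x) + (f₂ x - g₂ x) := by
      simp only [Pi.add_apply]; ring
    rw [e]
    exact (abs_add_le _ _).trans (by linarith [k₁ x hx, k₂ x hx])
  smul_mem' := by
    intro c f h ε hε
    obtain ⟨g, m, k⟩ := h (ε / (|c| + 1)) (by positivity)
    refine ⟨c • g, V.smul_mem c m, fun x hx => ?_⟩
    have e : (c • f) x - (c • g) x = c * (f x - g x) := by
      simp only [Pi.smul_apply, smul_eq_mul]; ring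
    rw [e, abs_mul]
    calc |c| * |f x - g x| ≤ (|c| + 1) * (ε / (|c| + 1)) := by
          gcongr
          · linarith
          · exact k x hx
      _ = ε := by field_simp

theorem le_unifClosure {X : Type*} (K : Set X) (V : Submodule ℝ (X → ℝ)) : V ≤ unifClosure K V :=
  fun f hf ε hε => ⟨f, hf, fun x _ => by simpa using hε.le⟩

theorem mem_unifClosure_of_forall_exists {X : Type*} {K : Set X} {V : Submodule ℝ (X → ℝ)}
    {f : X → ℝ} (h : ∀ ε > 0, ∃ g ∈ unifClosure K V, ∀ x ∈ K, |f x - g x| ≤ ε) :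
    f ∈ unifClosure K V := by
  intro ε hε
  obtain ⟨g, hg, k⟩ := h (ε / 2) (by positivity)
  obtain ⟨g', hg', k'⟩ := hg (ε / 2) (by positivity)
  refine ⟨g', hg', fun x hx => ?_⟩
  have e : f x - g' x = (f x - g x) + (g x - g' x) := by ring
  rw [e]
  exact (abs_add_le _ _).trans (by linarith [k x hx, k' x hx])

theorem mem_unifClosure_congr {X : Type*} {K : Set X} {V : Submodule ℝ (X → ℝ)}
    {f g : X → ℝ} (hg : g ∈ unifClosure K V) (h : ∀ x ∈ K, f x = g x) : f ∈ unifClosure K V :=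
  mem_unifClosure_of_forall_exists fun ε hε => ⟨g, hg, fun x hx => by
    rw [h x hx, sub_self, abs_zero]; exact hε.le⟩

/-- Second order expansion of `(1 + z)^(-μ)` at the origin. -/
theorem one_add_rpow_neg_expansion (μ : ℝ) {ε : ℝ} (hε : 0 < ε) :
    ∃ δ ∈ Ioc (0 : ℝ) 1, ∀ z : ℝ, |z| < δ →
      |(1 + z) ^ (-μ) - (1 - μ * z + μ * (μ + 1) / 2 * z ^ 2)| ≤ ε * z ^ 2 := by
  have hd : ∀ r z : ℝ, -1 < z → HasDerivAt (fun z : ℝ => (1 + z) ^ r) (r * (1 + z) ^ (r - 1)) z := by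
    intro r z hz
    have h1 : HasDerivAt (fun z : ℝ => 1 + z) 1 z := (hasDerivAt_id z).const_add 1
    have := h1.rpow_const (p := r) (Or.inl (by linarith))
    simpa using this
  set f : ℝ → ℝ := fun z => (1 + z) ^ (-μ) - (1 - μ * z + μ * (μ + 1) / 2 * z ^ 2) with hf
  set f' : ℝ → ℝ := fun z => -μ * (1 + z) ^ (-μ - 1) - (-μ + μ * (μ + 1) * z) with hf'
  have hfd : ∀ z : ℝ, -1 < z → HasDerivAt f (f' z) z := by
    intro z hz
    have h1 : HasDerivAt (fun z : ℝ => 1 - μ * z + μ * (μ + 1) / 2 * z ^ 2)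
        (-μ + μ * (μ + 1) * z) z := by
      have := (((hasDerivAt_id z).const_mul μ).const_sub 1).add
        (((hasDerivAt_id z).pow 2).const_mul (μ * (μ + 1) / 2))
      refine this.congr_deriv ?_
      simp
      ring
    exact (hd (-μ) z hz).sub h1
  have hf'0 : HasDerivAt f' 0 0 := by
    have h1 : HasDerivAt (fun z : ℝ => -μ + μ * (μ + 1) * z) (μ * (μ + 1)) 0 := by
      have := ((hasDerivAt_id (0 : ℝ)).const_mul (μ * (μ + 1))).const_add (-μ)
      simpa using this
    have := ((hd (-μ - 1) 0 (by norm_num)).const_mul (-μ)).sub h1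
    refine this.congr_deriv ?_
    simp
    ring
  have ho := hf'0.isLittleO
  have hf'z : f' 0 = 0 := by simp [hf']
  have hfz : f 0 = 0 := by simp [hf]
  simp only [hf'z, sub_zero, smul_zero] at ho
  have hb := ho.bound hε
  rw [Metric.eventually_nhds_iff] at hb
  obtain ⟨δ, hδ, hb⟩ := hb
  refine ⟨min δ 1, ⟨by positivity, min_le_right _ _⟩, fun z hz => ?_⟩
  have hz1 : |z| < δ := hz.trans_le (min_le_left _ _)
  have hz2 : |z| < 1 := hz.trans_le (min_le_right _ _)
  have hsub : ∀ y ∈ uIcc 0 z, |y| ≤ |z| := by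
    intro y hy
    have := abs_sub_left_of_mem_uIcc hy
    simpa using this
  have hmv := (convex_uIcc 0 z).norm_image_sub_le_of_norm_hasDerivWithin_le (f := f) (f' := f')
    (C := ε * |z|) (fun y hy => (hfd y (by
      have := (abs_lt.1 ((hsub y hy).trans_lt hz2)).1; linarith)).hasDerivWithinAt)
    (fun y hy => by
      have h1 := hb (y := y) (by simpa using (hsub y hy).trans_lt hz1)
      exact h1.trans (by
        rw [Real.norm_eq_abs]
        exact mul_le_mul_of_nonneg_left (hsub y hy) hε.le)) left_mem_uIcc right_mem_uIcc
  rw [hfz, sub_zero, sub_zero, Real.norm_eq_abs, Real.norm_eq_abs, mul_assoc, abs_mul_abs_self, ← sq] at hmv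
  exact hmv

theorem second_difference_algebra {μ Q p t W F₁ F₂ : ℝ} (hQ : 0 < Q) (ht : 0 < t) :
    4 * μ * (μ + 1) * (p ^ 2 * (W / Q ^ 2)) - 2 * μ * (W / Q) -
      (t ^ 2)⁻¹ * (W * (F₁ + (1 - μ * ((2 * t * p + t ^ 2) / Q) +
        μ * (μ + 1) / 2 * ((2 * t * p + t ^ 2) / Q) ^ 2)) +
        W * (F₂ + (1 - μ * ((2 * t * -p + t ^ 2) / Q) +
        μ * (μ + 1) / 2 * ((2 * t * -p + t ^ 2) / Q) ^ 2)) - 2 * W) =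
      -(W * (μ * (μ + 1) / Q ^ 2 * t ^ 2 + (F₁ / t ^ 2 + F₂ / t ^ 2))) := by
  field_simp
  ring

theorem second_difference_bound {μ q Q p t W A η L F₁ F₂ : ℝ} (hμ : 0 ≤ μ) (hq : 0 < q)
    (hQ : q ≤ Q) (ht : 0 < t) (hW : 0 < W) (hWA : W ≤ A)
    (h₁ : |F₁ - (1 - μ * ((2 * t * p + t ^ 2) / Q) +
        μ * (μ + 1) / 2 * ((2 * t * p + t ^ 2) / Q) ^ 2)| ≤ η * (L * t) ^ 2)
    (h₂ : |F₂ - (1 - μ * ((2 * t * -p + t ^ 2) / Q) +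
        μ * (μ + 1) / 2 * ((2 * t * -p + t ^ 2) / Q) ^ 2)| ≤ η * (L * t) ^ 2) :
    |4 * μ * (μ + 1) * (p ^ 2 * (W / Q ^ 2)) - 2 * μ * (W / Q) -
      (t ^ 2)⁻¹ * (W * F₁ + W * F₂ - 2 * W)| ≤
      A * (μ * (μ + 1) / q ^ 2 * t ^ 2 + (η * L ^ 2 + η * L ^ 2)) := by
  have hQ0 : 0 < Q := hq.trans_le hQ
  obtain ⟨G₁, hG₁⟩ : ∃ G, G = F₁ - (1 - μ * ((2 * t * p + t ^ 2) / Q) +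
        μ * (μ + 1) / 2 * ((2 * t * p + t ^ 2) / Q) ^ 2) := ⟨_, rfl⟩
  obtain ⟨G₂, hG₂⟩ : ∃ G, G = F₂ - (1 - μ * ((2 * t * -p + t ^ 2) / Q) +
        μ * (μ + 1) / 2 * ((2 * t * -p + t ^ 2) / Q) ^ 2) := ⟨_, rfl⟩
  rw [← hG₁] at h₁
  rw [← hG₂] at h₂
  have hFt : ∀ F : ℝ, |F| ≤ η * (L * t) ^ 2 → |F / t ^ 2| ≤ η * L ^ 2 := by
    intro F h
    rw [abs_div, abs_of_pos (by positivity : 0 < t ^ 2), div_le_iff₀ (by positivity)]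
    linarith
  rw [eq_add_of_sub_eq hG₁.symm, eq_add_of_sub_eq hG₂.symm, second_difference_algebra hQ0 ht,
    abs_neg, abs_mul, abs_of_pos hW]
  have hA : 0 ≤ A := hW.le.trans hWA
  refine mul_le_mul hWA ?_ (abs_nonneg _) hA
  refine (abs_add_le _ _).trans (add_le_add ?_ ((abs_add_le _ _).trans
    (add_le_add (hFt _ h₁) (hFt _ h₂))))
  rw [abs_of_nonneg (by positivity)]
  gcongr

/-- Symmetric second differences of `Q^(-μ)`, uniformly in the parameters. -/
theorem second_difference_rpow_neg {μ q P ε : ℝ} (hμ : 0 ≤ μ) (hq : 0 < q) (hP : 0 ≤ P)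
    (hε : 0 < ε) :
    ∃ δ > 0, ∀ t : ℝ, 0 < t → t < δ → ∀ Q p : ℝ, q ≤ Q → |p| ≤ P →
      |(4 * μ * (μ + 1) * (p ^ 2 * Q ^ (-μ - 2)) - 2 * μ * Q ^ (-μ - 1)) -
        (t ^ 2)⁻¹ * ((Q + 2 * t * p + t ^ 2) ^ (-μ) + (Q - 2 * t * p + t ^ 2) ^ (-μ) -
          2 * Q ^ (-μ))| ≤ ε := by
  set L := (2 * P + 1) / q with hL
  have hL0 : 0 < L := by positivity
  set A := q ^ (-μ) with hA
  have hA0 : 0 < A := Real.rpow_pos_of_pos hq _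
  set B := A * (μ * (μ + 1) / q ^ 2) with hB
  have hB0 : 0 ≤ B := by positivity
  set η := ε / (4 * (A * L ^ 2)) with hη
  have hη0 : 0 < η := by positivity
  obtain ⟨δ, ⟨hδ, hδ1⟩, hexp⟩ := one_add_rpow_neg_expansion μ hη0
  refine ⟨min (δ / L) (min 1 (ε / (2 * B + 1))), by positivity, ?_⟩
  intro t ht htδ Q p hQ hp
  have t1 : L * t < δ := by
    have := htδ.trans_le (min_le_left _ _)
    rw [lt_div_iff₀ hL0] at this
    linarith
  have t2 : t < 1 := htδ.trans_le ((min_le_right _ _).trans (min_le_left _ _))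
  have t3 : t * (2 * B + 1) < ε := by
    have := htδ.trans_le ((min_le_right _ _).trans (min_le_right _ _))
    rwa [lt_div_iff₀ (by positivity)] at this
  have hQ0 : 0 < Q := hq.trans_le hQ
  have hz : ∀ p' : ℝ, |p'| ≤ P → |(2 * t * p' + t ^ 2) / Q| ≤ L * t := by
    intro p' hp'
    rw [abs_div, abs_of_pos hQ0, div_le_iff₀ hQ0]
    calc |2 * t * p' + t ^ 2| ≤ 2 * t * P + t ^ 2 := by
          refine (abs_add_le _ _).trans ?_
          rw [abs_mul, abs_of_pos (by positivity : 0 < 2 * t), abs_of_pos (by positivity : 0 < t ^ 2)]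
          gcongr
      _ ≤ (2 * P + 1) * t := by nlinarith
      _ = L * t * q := by rw [hL]; field_simp
      _ ≤ L * t * Q := by gcongr
  have hF : ∀ p' : ℝ, |p'| ≤ P → |(1 + (2 * t * p' + t ^ 2) / Q) ^ (-μ) -
      (1 - μ * ((2 * t * p' + t ^ 2) / Q) +
        μ * (μ + 1) / 2 * ((2 * t * p' + t ^ 2) / Q) ^ 2)| ≤ η * (L * t) ^ 2 := by
    intro p' hp'
    refine (hexp _ ((hz p' hp').trans_lt t1)).trans ?_
    rw [← sq_abs ((2 * t * p' + t ^ 2) / Q)]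
    gcongr
    exact hz p' hp'
  have hsplit : ∀ p' : ℝ, |p'| ≤ P → (Q + 2 * t * p' + t ^ 2) ^ (-μ) =
      Q ^ (-μ) * (1 + (2 * t * p' + t ^ 2) / Q) ^ (-μ) := by
    intro p' hp'
    have hpos : 0 ≤ 1 + (2 * t * p' + t ^ 2) / Q := by
      have := (abs_lt.1 ((hz p' hp').trans_lt (t1.trans_le hδ1))).1
      linarith
    rw [← Real.mul_rpow hQ0.le hpos]
    congr 1
    field_simp
    ring
  have hp' : |(-p)| ≤ P := by rwa [abs_neg]
  have hs1 := hsplit p hp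
  have hs2 := hsplit (-p) hp'
  have hF1 := hF p hp
  have hF2 := hF (-p) hp'
  rw [show Q + 2 * t * -p + t ^ 2 = Q - 2 * t * p + t ^ 2 by ring] at hs2
  rw [hs1, hs2, Real.rpow_sub hQ0, Real.rpow_sub hQ0, Real.rpow_one, Real.rpow_two]
  have hAQ : Q ^ (-μ) ≤ A := Real.rpow_le_rpow_of_nonpos hq hQ (by linarith)
  have hQμ : 0 < Q ^ (-μ) := Real.rpow_pos_of_pos hQ0 _
  calc _ ≤ A * (μ * (μ + 1) / q ^ 2 * t ^ 2 + (η * L ^ 2 + η * L ^ 2)) :=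
        second_difference_bound hμ hq hQ ht hQμ hAQ hF1 hF2
    _ = B * t ^ 2 + 2 * (A * L ^ 2) * η := by rw [hB]; ring
    _ = B * t ^ 2 + ε / 2 := by
        rw [hη]
        field_simp
        ring
    _ ≤ B * t + ε / 2 := by
        gcongr
        nlinarith
    _ ≤ ε := by nlinarith

theorem sq_le_norm_sub_sq {n : ℕ} {b x : EuclideanSpace ℝ (Fin n)} (hb : 1 < ‖b‖)
    (hx : x ∈ closedBall (0 : EuclideanSpace ℝ (Fin n)) 1) : (‖b‖ - 1) ^ 2 ≤ ‖x - b‖ ^ 2 := by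
  have hx : ‖x‖ ≤ 1 := by simpa using hx
  have h1 : ‖b‖ - 1 ≤ ‖x - b‖ := by
    have := norm_sub_norm_le b x
    rw [norm_sub_rev] at this
    linarith
  exact pow_le_pow_left₀ (by linarith) h1 2

theorem norm_sub_sq_le {n : ℕ} {b x : EuclideanSpace ℝ (Fin n)}
    (hx : x ∈ closedBall (0 : EuclideanSpace ℝ (Fin n)) 1) : ‖x - b‖ ^ 2 ≤ (‖b‖ + 1) ^ 2 := by
  have hx : ‖x‖ ≤ 1 := by simpa using hx
  have h1 : ‖x - b‖ ≤ ‖b‖ + 1 := (norm_sub_le x b).trans (by linarith)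
  exact pow_le_pow_left₀ (norm_nonneg _) h1 2

/-- Uniform closures that contain the translates of a power of the distance contain the next
power as well. -/
theorem rpow_succ_mem_unifClosure {n : ℕ} {V : Submodule ℝ (EuclideanSpace ℝ (Fin n) → ℝ)} {μ : ℝ}
    (hμ : 0 < μ) (hμn : (n : ℝ) / 2 ≤ μ)
    (H : ∀ b : EuclideanSpace ℝ (Fin n), 1 < ‖b‖ →
      (fun x => (‖x - b‖ ^ 2) ^ (-μ)) ∈ unifClosure (closedBall 0 1) V)
    (b : EuclideanSpace ℝ (Fin n)) (hb : 1 < ‖b‖) :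
    (fun x => (‖x - b‖ ^ 2) ^ (-(μ + 1))) ∈ unifClosure (closedBall 0 1) V := by
  set W := unifClosure (closedBall 0 1) V with hW
  have hq : 0 < (‖b‖ - 1) ^ 2 := by
    have : 0 < ‖b‖ - 1 := by linarith
    positivity
  have hG : ∀ i : Fin n, (fun x : EuclideanSpace ℝ (Fin n) =>
      4 * μ * (μ + 1) * ((b i - x i) ^ 2 * (‖x - b‖ ^ 2) ^ (-μ - 2)) -
        2 * μ * (‖x - b‖ ^ 2) ^ (-μ - 1)) ∈ W := by
    intro i
    refine mem_unifClosure_of_forall_exists fun ε hε => ?_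
    obtain ⟨δ, hδ, h⟩ := second_difference_rpow_neg hμ.le hq (P := ‖b‖ + 1) (by positivity) hε
    set t := min (δ / 2) ((‖b‖ - 1) / 2) with ht
    have ht0 : 0 < t := lt_min (by positivity) (by linarith)
    have htδ : t < δ := (min_le_left _ _).trans_lt (by linarith)
    have htb : t ≤ (‖b‖ - 1) / 2 := min_le_right _ _
    set v : EuclideanSpace ℝ (Fin n) := EuclideanSpace.single i 1 with hv
    have hvn : ‖v‖ = 1 := by simp [hv]
    have hn1 : ∀ r : ℝ, |r| = t → 1 < ‖b + r • v‖ := by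
      intro r hr
      have h1 : ‖b‖ - ‖-(r • v)‖ ≤ ‖b - -(r • v)‖ := norm_sub_norm_le _ _
      rw [norm_neg, norm_smul, hvn, Real.norm_eq_abs, hr, sub_neg_eq_add] at h1
      linarith
    have hQ : ∀ (r : ℝ) (x : EuclideanSpace ℝ (Fin n)),
        ‖x - (b + r • v)‖ ^ 2 = ‖x - b‖ ^ 2 + 2 * r * (b i - x i) + r ^ 2 := by
      intro r x
      rw [← sub_sub, norm_sub_sq_real, norm_smul, hvn, real_inner_smul_right, hv,
        EuclideanSpace.inner_single_right]
      simp
      ring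
    refine ⟨(t ^ 2)⁻¹ • ((fun x => (‖x - (b + t • v)‖ ^ 2) ^ (-μ)) +
      (fun x => (‖x - (b + (-t) • v)‖ ^ 2) ^ (-μ)) - (2 : ℝ) • fun x => (‖x - b‖ ^ 2) ^ (-μ)),
      W.smul_mem _ (W.sub_mem (W.add_mem (H _ (hn1 _ (abs_of_pos ht0)))
        (H _ (hn1 _ (by rw [abs_neg, abs_of_pos ht0])))) (W.smul_mem _ (H b hb))), ?_⟩
    intro x hx
    have hx' : ‖x‖ ≤ 1 := by simpa using hx
    have hp : |b i - x i| ≤ ‖b‖ + 1 := by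
      have := PiLp.norm_apply_le (b - x) i
      exact this.trans ((norm_sub_le b x).trans (by linarith))
    have := h t ht0 htδ (‖x - b‖ ^ 2) (b i - x i) (sq_le_norm_sub_sq hb hx) hp
    simp only [Pi.smul_apply, Pi.sub_apply, Pi.add_apply, smul_eq_mul, hQ]
    rwa [show ‖x - b‖ ^ 2 + 2 * -t * (b i - x i) + (-t) ^ 2 =
      ‖x - b‖ ^ 2 - 2 * t * (b i - x i) + t ^ 2 by ring]
  have hsum := W.sum_mem (fun i (_ : i ∈ Finset.univ) => hG i)
  have hc : 4 * μ * (μ + 1) - 2 * μ * n ≠ 0 := by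
    have : 0 < 4 * μ * (μ + 1) - 2 * μ * n := by nlinarith
    exact this.ne'
  refine mem_unifClosure_congr (W.smul_mem (4 * μ * (μ + 1) - 2 * μ * n)⁻¹ hsum) fun x hx => ?_
  have hQ0 : 0 < ‖x - b‖ ^ 2 := hq.trans_le (sq_le_norm_sub_sq hb hx)
  have hs : ∑ i, (b i - x i) ^ 2 = ‖x - b‖ ^ 2 := by
    rw [EuclideanSpace.real_norm_sq_eq]
    exact Finset.sum_congr rfl fun i _ => by simp; ring
  simp only [Pi.smul_apply, Finset.sum_apply, smul_eq_mul]
  rw [Finset.sum_sub_distrib, ← Finset.mul_sum, ← Finset.sum_mul, hs, Finset.sum_const,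
    Finset.card_univ, Fintype.card_fin, nsmul_eq_mul, neg_add, ← sub_eq_add_neg,
    Real.rpow_sub hQ0, Real.rpow_sub hQ0, Real.rpow_one, Real.rpow_two,
    inv_mul_eq_div, eq_div_iff hc]
  field_simp

theorem rpow_sub_nat_mem_unifClosure {n : ℕ} {V : Submodule ℝ (EuclideanSpace ℝ (Fin n) → ℝ)}
    {μ : ℝ} (hμ : 0 < μ) (hμn : (n : ℝ) / 2 ≤ μ)
    (H : ∀ b : EuclideanSpace ℝ (Fin n), 1 < ‖b‖ →
      (fun x => (‖x - b‖ ^ 2) ^ (-μ)) ∈ unifClosure (closedBall 0 1) V) (m : ℕ) :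
    ∀ b : EuclideanSpace ℝ (Fin n), 1 < ‖b‖ →
      (fun x => (‖x - b‖ ^ 2) ^ (-(μ + m))) ∈ unifClosure (closedBall 0 1) V := by
  induction m with
  | zero => simpa using H
  | succ m ih =>
    have hm : (0 : ℝ) ≤ m := Nat.cast_nonneg m
    have := rpow_succ_mem_unifClosure (by linarith) (by linarith) ih
    intro b hb
    convert this b hb using 4
    push_cast
    ring

theorem comp_norm_sub_sq_mem_unifClosure {n : ℕ}
    {V : Submodule ℝ (EuclideanSpace ℝ (Fin n) → ℝ)}
    {μ : ℝ} (hμ : 0 < μ) (hμn : (n : ℝ) / 2 ≤ μ)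
    (H : ∀ b : EuclideanSpace ℝ (Fin n), 1 < ‖b‖ →
      (fun x => (‖x - b‖ ^ 2) ^ (-μ)) ∈ unifClosure (closedBall 0 1) V)
    {h : ℝ → ℝ} (hh : Continuous h) (b : EuclideanSpace ℝ (Fin n)) (hb : 1 < ‖b‖) :
    (fun x => h (‖x - b‖ ^ 2)) ∈ unifClosure (closedBall 0 1) V := by
  set W := unifClosure (closedBall 0 1) V with hW
  have hq : 0 < (‖b‖ - 1) ^ 2 := by
    have : 0 < ‖b‖ - 1 := by linarith
    positivity
  set q := (‖b‖ - 1) ^ 2 with hqdef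
  set q' := (‖b‖ + 1) ^ 2 with hq'def
  have hq' : 0 < q' := by positivity
  refine mem_unifClosure_of_forall_exists fun ε hε => ?_
  have hA : 0 < q ^ (-μ) := Real.rpow_pos_of_pos hq _
  have hcont : ContinuousOn (fun y : ℝ => h (y⁻¹) * y ^ (-μ)) (Icc q'⁻¹ q⁻¹) := by
    intro y hy
    have hy0 : 0 < y := (inv_pos.2 hq').trans_le hy.1
    refine ContinuousAt.continuousWithinAt (ContinuousAt.mul ?_ ?_)
    · exact hh.continuousAt.comp (continuousAt_inv₀ hy0.ne')
    · exact Real.continuousAt_rpow_const _ _ (Or.inl hy0.ne')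
  obtain ⟨p, hp⟩ := exists_polynomial_near_of_continuousOn _ _ _ hcont (ε / q ^ (-μ))
    (by positivity)
  refine ⟨∑ i ∈ Finset.range (p.natDegree + 1),
    p.coeff i • fun x => (‖x - b‖ ^ 2) ^ (-(μ + i)),
    W.sum_mem fun i _ => W.smul_mem _ (rpow_sub_nat_mem_unifClosure hμ hμn H i b hb), ?_⟩
  intro x hx
  have h1 : q ≤ ‖x - b‖ ^ 2 := sq_le_norm_sub_sq hb hx
  have h2 : ‖x - b‖ ^ 2 ≤ q' := norm_sub_sq_le hx
  simp only [Finset.sum_apply, Pi.smul_apply, smul_eq_mul]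
  generalize ‖x - b‖ ^ 2 = Q at h1 h2 ⊢
  have hQ : 0 < Q := hq.trans_le h1
  have h3 := hp Q⁻¹ ⟨inv_anti₀ hQ h2, inv_anti₀ hq h1⟩
  have e1 : ∑ i ∈ Finset.range (p.natDegree + 1), p.coeff i * Q ^ (-(μ + i)) =
      Q ^ (-μ) * p.eval Q⁻¹ := by
    rw [Polynomial.eval_eq_sum_range, Finset.mul_sum]
    refine Finset.sum_congr rfl fun i _ => ?_
    rw [neg_add, Real.rpow_add hQ, Real.rpow_neg hQ.le (i : ℝ), Real.rpow_natCast, inv_pow]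
    ring
  have e2 : h Q = Q ^ (-μ) * (h (Q⁻¹⁻¹) * Q⁻¹ ^ (-μ)) := by
    rw [inv_inv, Real.inv_rpow hQ.le]
    have := (Real.rpow_pos_of_pos hQ (-μ)).ne'
    field_simp
  rw [e1, e2, ← mul_sub, abs_mul, abs_of_pos (Real.rpow_pos_of_pos hQ _), abs_sub_comm]
  have hAQ : Q ^ (-μ) ≤ q ^ (-μ) := Real.rpow_le_rpow_of_nonpos hq h1 (by linarith)
  calc _ ≤ q ^ (-μ) * (ε / q ^ (-μ)) := by gcongr
    _ = ε := by field_simp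

theorem exp_inner_mem_unifClosure {n : ℕ} [NeZero n]
    {V : Submodule ℝ (EuclideanSpace ℝ (Fin n) → ℝ)}
    {μ : ℝ} (hμ : 0 < μ) (hμn : (n : ℝ) / 2 ≤ μ)
    (H : ∀ b : EuclideanSpace ℝ (Fin n), 1 < ‖b‖ →
      (fun x => (‖x - b‖ ^ 2) ^ (-μ)) ∈ unifClosure (closedBall 0 1) V)
    (v : EuclideanSpace ℝ (Fin n)) :
    (fun x : EuclideanSpace ℝ (Fin n) => Real.exp ⟪x, v⟫) ∈ unifClosure (closedBall 0 1) V := by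
  by_cases hv : v = 0
  · subst hv
    obtain ⟨b, hb⟩ := NormedSpace.exists_lt_norm ℝ (EuclideanSpace ℝ (Fin n)) 1
    simpa using comp_norm_sub_sq_mem_unifClosure hμ hμn H (continuous_const (y := (1 : ℝ))) b hb
  set W := unifClosure (closedBall 0 1) V with hW
  have hv0 : 0 < ‖v‖ := norm_pos_iff.2 hv
  refine mem_unifClosure_of_forall_exists fun ε hε => ?_
  set a := min (‖v‖ / 4) (ε / Real.exp ‖v‖) with ha
  have ha0 : 0 < a := by positivity
  have ha1 : a ≤ ‖v‖ / 4 := min_le_left _ _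
  have ha2 : a * Real.exp ‖v‖ ≤ ε := by
    rw [← le_div_iff₀ (Real.exp_pos _)]
    exact min_le_right _ _
  set b := (1 / (2 * a)) • v with hbdef
  have hb : 1 < ‖b‖ := by
    rw [hbdef, norm_smul, Real.norm_eq_abs, abs_of_pos (by positivity), div_mul_eq_mul_div, one_mul,
      lt_div_iff₀ (by positivity)]
    linarith
  refine ⟨Real.exp (‖v‖ ^ 2 / (4 * a)) • fun x => Real.exp (-a * ‖x - b‖ ^ 2),
    W.smul_mem _ (comp_norm_sub_sq_mem_unifClosure hμ hμn H
      (h := fun Q => Real.exp (-a * Q)) (by fun_prop) b hb), ?_⟩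
  intro x hx
  have hx : ‖x‖ ≤ 1 := by simpa using hx
  simp only [Pi.smul_apply, smul_eq_mul]
  have e1 : ‖v‖ ^ 2 / (4 * a) + -a * ‖x - b‖ ^ 2 = ⟪x, v⟫ + -(a * ‖x‖ ^ 2) := by
    rw [norm_sub_sq_real, hbdef, real_inner_smul_right, norm_smul, Real.norm_eq_abs,
      abs_of_pos (by positivity)]
    field_simp
    ring
  rw [← Real.exp_add, e1, Real.exp_add]
  have h1 : Real.exp ⟪x, v⟫ ≤ Real.exp ‖v‖ := by
    refine Real.exp_le_exp.2 ((real_inner_le_norm x v).trans ?_)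
    nlinarith
  have h2 : 1 - a ≤ Real.exp (-(a * ‖x‖ ^ 2)) := by
    have := Real.add_one_le_exp (-(a * ‖x‖ ^ 2))
    have h3 : a * ‖x‖ ^ 2 ≤ a * 1 := by
      gcongr
      nlinarith [norm_nonneg x]
    linarith
  have h4 : Real.exp (-(a * ‖x‖ ^ 2)) ≤ 1 := Real.exp_le_one_iff.2 (by
    have : 0 ≤ a * ‖x‖ ^ 2 := by positivity
    linarith)
  have e2 : Real.exp ⟪x, v⟫ - Real.exp ⟪x, v⟫ * Real.exp (-(a * ‖x‖ ^ 2)) =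
      Real.exp ⟪x, v⟫ * (1 - Real.exp (-(a * ‖x‖ ^ 2))) := by ring
  rw [e2, abs_of_nonneg (mul_nonneg (Real.exp_pos _).le (by linarith))]
  calc _ ≤ Real.exp ‖v‖ * a := by
        gcongr
        linarith
    _ ≤ ε := by linarith

/-- The restrictions of real exponentials to the closed unit ball. -/
noncomputable def expSubmonoid (n : ℕ) :
    Submonoid C(closedBall (0 : EuclideanSpace ℝ (Fin n)) 1, ℝ) where
  carrier := range fun v : EuclideanSpace ℝ (Fin n) =>
    (⟨fun x => Real.exp ⟪(x : EuclideanSpace ℝ (Fin n)), v⟫, by fun_prop⟩ :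
      C(closedBall (0 : EuclideanSpace ℝ (Fin n)) 1, ℝ))
  one_mem' := ⟨0, by ext x; simp⟩
  mul_mem' := by
    rintro _ _ ⟨v, rfl⟩ ⟨w, rfl⟩
    refine ⟨v + w, ?_⟩
    ext x
    simp [inner_add_right, Real.exp_add]

theorem continuous_mem_unifClosure {n : ℕ} {V : Submodule ℝ (EuclideanSpace ℝ (Fin n) → ℝ)}
    (H : ∀ v : EuclideanSpace ℝ (Fin n),
      (fun x : EuclideanSpace ℝ (Fin n) => Real.exp ⟪x, v⟫) ∈ unifClosure (closedBall 0 1) V)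
    {g : EuclideanSpace ℝ (Fin n) → ℝ} (hg : Continuous g) :
    g ∈ unifClosure (closedBall 0 1) V := by
  set K := closedBall (0 : EuclideanSpace ℝ (Fin n)) 1 with hK
  have : CompactSpace K := isCompact_iff_compactSpace.1 (isCompact_closedBall 0 1)
  set A := Algebra.adjoin ℝ (expSubmonoid n : Set C(K, ℝ)) with hA
  have hsep : A.SeparatesPoints := by
    intro x y hxy
    have hxy' : (x : EuclideanSpace ℝ (Fin n)) ≠ y := fun h => hxy (Subtype.ext h)
    set v : EuclideanSpace ℝ (Fin n) := x - y with hv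
    refine ⟨fun z => Real.exp ⟪(z : EuclideanSpace ℝ (Fin n)), v⟫,
      ⟨_, Algebra.subset_adjoin ⟨v, rfl⟩, rfl⟩, ?_⟩
    intro h
    have h1 := Real.exp_injective h
    have h2 : ⟪v, v⟫ = 0 := by
      rw [hv, inner_sub_left, ← hv]
      exact sub_eq_zero.2 h1
    exact hxy' (sub_eq_zero.1 (inner_self_eq_zero.1 h2))
  have htop := ContinuousMap.subalgebra_topologicalClosure_eq_top_of_separatesPoints A hsep
  have hspan : ∀ f ∈ Submodule.span ℝ (expSubmonoid n : Set C(K, ℝ)),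
      ∃ F ∈ unifClosure K V, ∀ x : K, F x = f x := by
    intro f hf
    induction hf using Submodule.span_induction with
    | mem f hf =>
      obtain ⟨v, rfl⟩ := hf
      exact ⟨_, H v, fun x => rfl⟩
    | zero => exact ⟨0, Submodule.zero_mem _, fun x => rfl⟩
    | add f₁ f₂ _ _ h₁ h₂ =>
      obtain ⟨F₁, m₁, k₁⟩ := h₁
      obtain ⟨F₂, m₂, k₂⟩ := h₂
      exact ⟨F₁ + F₂, Submodule.add_mem _ m₁ m₂, fun x => by simp [k₁, k₂]⟩
    | smul c f _ h =>
      obtain ⟨F, m, k⟩ := h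
      exact ⟨c • F, Submodule.smul_mem _ c m, fun x => by simp [k]⟩
  refine mem_unifClosure_of_forall_exists fun ε hε => ?_
  set G : C(K, ℝ) := ⟨fun x => g x, by fun_prop⟩ with hG
  have hGm : G ∈ closure (A : Set C(K, ℝ)) := by
    rw [← Subalgebra.topologicalClosure_coe, htop]
    trivial
  obtain ⟨f, hf, hdist⟩ := Metric.mem_closure_iff.1 hGm ε hε
  have hf' : f ∈ Submodule.span ℝ (expSubmonoid n : Set C(K, ℝ)) := by
    have : f ∈ Subalgebra.toSubmodule A := hf
    rwa [hA, Algebra.adjoin_eq_span, Submonoid.closure_eq] at this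
  obtain ⟨F, hF, k⟩ := hspan f hf'
  refine ⟨F, hF, fun x hx => ?_⟩
  have := (ContinuousMap.dist_apply_le_dist (f := G) (g := f) ⟨x, hx⟩).trans hdist.le
  rw [Real.dist_eq] at this
  rw [k ⟨x, hx⟩]
  exact this

theorem fracC_pos (n : ℕ) {s : ℝ} (hs : s ∈ Ioo (0 : ℝ) 1) : 0 < fracC n s := by
  have h1 : 0 < Real.Gamma ((n : ℝ) / 2 + s) :=
    Real.Gamma_pos_of_pos (add_pos_of_nonneg_of_pos (by positivity) hs.1)
  have h2 := Real.Gamma_pos_of_pos (sub_pos.2 hs.2)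
  have h3 := hs.1
  have h4 := Real.pi_pos
  unfold fracC
  positivity

/-- The coefficient of `‖x - b‖^(-(n+2s))` in `ballKernelLap n s b`. -/
noncomputable def lapCoeff (n : ℕ) (s : ℝ) (b : EuclideanSpace ℝ (Fin n)) : ℝ :=
  fracC n s * (sphereMass n / 2 * (Real.Gamma s * Real.Gamma (1 - s))) * (‖b‖ ^ 2 - 1) ^ s

theorem lapCoeff_pos (n : ℕ) [NeZero n] {s : ℝ} (hs : s ∈ Ioo (0 : ℝ) 1)
    {b : EuclideanSpace ℝ (Fin n)} (hb : 1 < ‖b‖) : 0 < lapCoeff n s b := by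
  have h1 := Real.Gamma_pos_of_pos hs.1
  have h2 := Real.Gamma_pos_of_pos (sub_pos.2 hs.2)
  have h3 := fracC_pos n hs
  have h4 := sphereMass_pos n
  have h5 : 0 < ‖b‖ ^ 2 - 1 := by nlinarith
  unfold lapCoeff
  positivity

theorem ballKernelLap_eq (n : ℕ) (s : ℝ) (b x : EuclideanSpace ℝ (Fin n)) :
    ballKernelLap n s b x = lapCoeff n s b * (‖x - b‖ ^ 2) ^ (-(((n : ℝ) + 2 * s) / 2)) := by
  have h : (‖x - b‖ ^ 2) ^ (-(((n : ℝ) + 2 * s) / 2)) = 1 / ‖x - b‖ ^ ((n : ℝ) + 2 * s) := by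
    rw [← Real.rpow_natCast ‖x - b‖ 2, ← Real.rpow_mul (norm_nonneg _), one_div,
      ← Real.rpow_neg (norm_nonneg _)]
    congr 1
    push_cast
    ring
  rw [h, ballKernelLap, lapCoeff]
  ring

theorem lower_bound_ballKernelLap (n : ℕ) [NeZero n] {s : ℝ} (hs : s ∈ Ioo (0 : ℝ) 1)
    {b : EuclideanSpace ℝ (Fin n)} (hb : 1 < ‖b‖) :
    ∃ m > 0, ∀ x ∈ closedBall (0 : EuclideanSpace ℝ (Fin n)) 1, m ≤ ballKernelLap n s b x := by
  have hc := lapCoeff_pos n hs hb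
  have hn : (0 : ℝ) ≤ n := Nat.cast_nonneg n
  refine ⟨lapCoeff n s b * ((‖b‖ + 1) ^ 2) ^ (-(((n : ℝ) + 2 * s) / 2)), by positivity, ?_⟩
  intro x hx
  have h0 : 0 < (‖b‖ - 1) ^ 2 := by
    have : 0 < ‖b‖ - 1 := by linarith
    positivity
  rw [ballKernelLap_eq]
  refine mul_le_mul_of_nonneg_left ?_ hc.le
  exact Real.rpow_le_rpow_of_nonpos (h0.trans_le (sq_le_norm_sub_sq hb hx)) (norm_sub_sq_le hx)
    (by linarith [hs.1])

theorem exists_approx_ballKernelLap (n : ℕ) [NeZero n] {s : ℝ} (hs : s ∈ Ioo (0 : ℝ) 1)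
    {g : EuclideanSpace ℝ (Fin n) → ℝ} (hg : Continuous g) {ε : ℝ} (hε : 0 < ε) :
    ∃ c : {b : EuclideanSpace ℝ (Fin n) // 1 < ‖b‖} →₀ ℝ,
      ∀ x ∈ closedBall (0 : EuclideanSpace ℝ (Fin n)) 1,
        |g x - ∑ b ∈ c.support, c b * ballKernelLap n s b x| ≤ ε := by
  set F : {b : EuclideanSpace ℝ (Fin n) // 1 < ‖b‖} → EuclideanSpace ℝ (Fin n) → ℝ :=
    fun b => ballKernelLap n s b with hF
  set V := Submodule.span ℝ (range F) with hV
  have hn : (0 : ℝ) ≤ n := Nat.cast_nonneg n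
  have H : ∀ b : EuclideanSpace ℝ (Fin n), 1 < ‖b‖ →
      (fun x => (‖x - b‖ ^ 2) ^ (-(((n : ℝ) + 2 * s) / 2))) ∈ unifClosure (closedBall 0 1) V := by
    intro b hb
    refine le_unifClosure _ _ ?_
    have h1 : (lapCoeff n s b)⁻¹ • F ⟨b, hb⟩ ∈ V :=
      V.smul_mem _ (Submodule.subset_span ⟨⟨b, hb⟩, rfl⟩)
    convert h1 using 1
    ext x
    have := (lapCoeff_pos n hs hb).ne'
    simp only [hF, Pi.smul_apply, smul_eq_mul, ballKernelLap_eq]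
    field_simp
  have hmem := continuous_mem_unifClosure
    (exp_inner_mem_unifClosure (by linarith [hs.1]) (by linarith [hs.1]) H) hg
  obtain ⟨f, hf, h⟩ := hmem ε hε
  obtain ⟨c, hc⟩ := Finsupp.mem_span_range_iff_exists_finsupp.1 hf
  refine ⟨c, fun x hx => ?_⟩
  have := h x hx
  rw [← hc, Finsupp.sum, Finset.sum_apply] at this
  exact this

/-- `u` is continuous, vanishes outside the unit ball, and has fractional Laplacian `f` inside. -/
structure SolvesInBall (n : ℕ) (s : ℝ) (u f : EuclideanSpace ℝ (Fin n) → ℝ) : Prop where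
  cont : Continuous u
  zero : ∀ z ∉ ball (0 : EuclideanSpace ℝ (Fin n)) 1, u z = 0
  lap : ∀ x ∈ ball (0 : EuclideanSpace ℝ (Fin n)) 1, HasFracLap n s u x (f x)

namespace SolvesInBall

variable {n : ℕ} {s : ℝ} {u u₁ u₂ f f₁ f₂ : EuclideanSpace ℝ (Fin n) → ℝ}

theorem integrableOn [NeZero n] (hs : 0 < s) (h : SolvesInBall n s u f) {ρ : ℝ} (hρ : 0 < ρ)
    (x : EuclideanSpace ℝ (Fin n)) :
    IntegrableOn (fun y => (u x - u (x + y)) / ‖y‖ ^ ((n : ℝ) + 2 * s))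
      {y : EuclideanSpace ℝ (Fin n) | ρ ≤ ‖y‖} := by
  obtain ⟨M, hM⟩ := exists_bound_of_continuous_of_eq_zero h.cont h.zero
  have := h.cont
  refine integrableOn_mul_tail n hs hρ (u := fun y => u x - u (x + y)) (by fun_prop) (M := M + M)
    fun y => ?_
  exact (abs_sub _ _).trans (add_le_add (hM _) (hM _))

theorem add [NeZero n] (hs : 0 < s) (h₁ : SolvesInBall n s u₁ f₁) (h₂ : SolvesInBall n s u₂ f₂) :
    SolvesInBall n s (u₁ + u₂) (f₁ + f₂) where
  cont := h₁.cont.add h₂.cont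
  zero z hz := by simp [h₁.zero z hz, h₂.zero z hz]
  lap x hx := by
    refine ((h₁.lap x hx).add (h₂.lap x hx)).congr' ?_
    filter_upwards [self_mem_nhdsWithin] with ρ hρ
    rw [← mul_add, ← integral_add (h₁.integrableOn hs hρ x) (h₂.integrableOn hs hρ x)]
    congr 2
    ext y
    simp only [Pi.add_apply]
    ring

theorem smul (c : ℝ) (h : SolvesInBall n s u f) : SolvesInBall n s (c • u) (c • f) where
  cont := h.cont.const_smul c
  zero z hz := by simp [h.zero z hz]
  lap x hx := by
    refine ((h.lap x hx).const_mul c).congr fun ρ => ?_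
    rw [mul_left_comm, ← integral_const_mul]
    congr 2
    ext y
    simp only [Pi.smul_apply, smul_eq_mul]
    ring

theorem zero_solves : SolvesInBall n s 0 0 where
  cont := continuous_const
  zero z hz := rfl
  lap x hx := by simp [HasFracLap]

theorem sum [NeZero n] (hs : 0 < s) {ι : Type*} (t : Finset ι)
    {u f : ι → EuclideanSpace ℝ (Fin n) → ℝ}
    (h : ∀ i, SolvesInBall n s (u i) (f i)) : SolvesInBall n s (∑ i ∈ t, u i) (∑ i ∈ t, f i) := by
  classical
  induction t using Finset.induction_on with
  | empty => simpa using zero_solves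
  | insert i t hi ih =>
    rw [Finset.sum_insert hi, Finset.sum_insert hi]
    exact (h i).add hs ih

/-- Maximum principle. -/
theorem nonpos (hs : s ∈ Ioo (0 : ℝ) 1) (h : SolvesInBall n s u f)
    (hf : ∀ x ∈ ball (0 : EuclideanSpace ℝ (Fin n)) 1, f x < 0) (x : EuclideanSpace ℝ (Fin n)) :
    u x ≤ 0 := by
  by_contra! hx
  obtain ⟨x₀, -, hmax⟩ := (isCompact_closedBall (0 : EuclideanSpace ℝ (Fin n)) 1).exists_isMaxOn
    ⟨0, by simp⟩ h.cont.continuousOn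
  have hxK : x ∈ closedBall (0 : EuclideanSpace ℝ (Fin n)) 1 := by
    by_contra hx'
    rw [h.zero x fun hb => hx' (ball_subset_closedBall hb)] at hx
    exact lt_irrefl _ hx
  have h0 : 0 < u x₀ := hx.trans_le (hmax hxK)
  have hx₀ : x₀ ∈ ball (0 : EuclideanSpace ℝ (Fin n)) 1 := by
    by_contra hx'
    rw [h.zero x₀ hx'] at h0
    exact lt_irrefl _ h0
  have hglob : ∀ y, u y ≤ u x₀ := by
    intro y
    by_cases hy : y ∈ closedBall (0 : EuclideanSpace ℝ (Fin n)) 1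
    · exact hmax hy
    · rw [h.zero y fun hb => hy (ball_subset_closedBall hb)]
      exact h0.le
  have : 0 ≤ f x₀ := by
    refine ge_of_tendsto (h.lap x₀ hx₀) (Eventually.of_forall fun ρ => ?_)
    refine mul_nonneg (fracC_pos n hs).le (integral_nonneg fun y => ?_)
    exact div_nonneg (sub_nonneg.2 (hglob _)) (Real.rpow_nonneg (norm_nonneg _) _)
  linarith [hf x₀ hx₀]

end SolvesInBall

theorem solvesInBall_ballKernel (n : ℕ) [NeZero n] {s : ℝ} (hs : s ∈ Ioo (0 : ℝ) 1)
    {b : EuclideanSpace ℝ (Fin n)} (hb : 1 < ‖b‖) :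
    SolvesInBall n s (ballKernel n s b) (ballKernelLap n s b) where
  cont := continuous_ballKernel n hs.1 hb
  zero _ hz := ballKernel_eq_zero n hs.1 b hz
  lap _ hx := hasFracLap_ballKernel n hs hb hx

/-- Solutions with small right-hand side are small with respect to `(1 - |x|²)₊^s`. -/
theorem exists_barrier (n : ℕ) [NeZero n] {s : ℝ} (hs : s ∈ Ioo (0 : ℝ) 1) :
    ∃ C, ∀ (u f : EuclideanSpace ℝ (Fin n) → ℝ) (η : ℝ), SolvesInBall n s u f → 0 ≤ η →
      (∀ x ∈ ball (0 : EuclideanSpace ℝ (Fin n)) 1, |f x| < η) →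
      ∀ x, |u x| ≤ C * η * max (1 - ‖x‖ ^ 2) 0 ^ s := by
  obtain ⟨b, hb⟩ := NormedSpace.exists_lt_norm ℝ (EuclideanSpace ℝ (Fin n)) 1
  obtain ⟨m, hm, hlow⟩ := lower_bound_ballKernelLap n hs hb
  have hbs := solvesInBall_ballKernel n hs hb
  refine ⟨m⁻¹ * (1 / (‖b‖ - 1) ^ n), ?_⟩
  intro u f η hu hη hf x
  have hb1 : 0 < ‖b‖ - 1 := by linarith
  have key : ∀ c : ℝ, |c| = 1 → c * u x ≤ η / m * ballKernel n s b x := by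
    intro c hc
    have h1 := ((hu.smul c).add hs.1 (hbs.smul (-(η / m)))).nonpos hs (fun y hy => by
      have h2 := hlow y (ball_subset_closedBall hy)
      have h3 : c * f y < η := by
        refine (le_abs_self _).trans_lt ?_
        rw [abs_mul, hc, one_mul]
        exact hf y hy
      have h4 : η ≤ η / m * ballKernelLap n s b y := by
        calc η = η / m * m := by field_simp
          _ ≤ _ := by gcongr
      simp only [Pi.add_apply, Pi.smul_apply, smul_eq_mul]
      linarith) x
    simp only [Pi.add_apply, Pi.smul_apply, smul_eq_mul] at h1
    linarith
  have h1 : |u x| ≤ η / m * ballKernel n s b x := by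
    rw [abs_le']
    exact ⟨by simpa using key 1 (by simp), by simpa using key (-1) (by simp)⟩
  by_cases hx : x ∈ ball (0 : EuclideanSpace ℝ (Fin n)) 1
  · refine h1.trans ?_
    have h2 : 1 / ‖x - b‖ ^ n ≤ 1 / (‖b‖ - 1) ^ n := by
      have h3 : ‖b‖ - 1 ≤ ‖x - b‖ := by
        have := norm_sub_norm_le b x
        rw [norm_sub_rev] at this
        have hx' : ‖x‖ < 1 := by simpa using hx
        linarith
      gcongr
    rw [ballKernel]
    calc η / m * (max (1 - ‖x‖ ^ 2) 0 ^ s * (1 / ‖x - b‖ ^ n))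
        ≤ η / m * (max (1 - ‖x‖ ^ 2) 0 ^ s * (1 / (‖b‖ - 1) ^ n)) := by gcongr
      _ = _ := by ring
  · rw [hu.zero x hx, abs_zero]
    positivity

theorem integrable_ballKernelLap_mul (n : ℕ) [NeZero n] {s : ℝ} (hs : s ∈ Ioo (0 : ℝ) 1)
    {e b : EuclideanSpace ℝ (Fin n)} (he : ‖e‖ = 1) (hb : 1 < ‖b‖) :
    Integrable fun z => ballKernelLap n s b z * ballKernel n s e z := by
  refine Integrable.of_integral_ne_zero fun h => ?_
  have h1 := kappaC_mul_integral_ballKernelLap n hs he hb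
  have hbe : e ≠ b := by rintro rfl; linarith
  have hd : 0 < ‖e - b‖ := norm_pos_iff.2 (sub_ne_zero.2 hbe)
  have h2 : 0 < 1 / ‖e - b‖ ^ n := by positivity
  rw [h, mul_zero] at h1
  linarith

/-- Boundary expansion of solutions with continuous right-hand side. -/
theorem SolvesInBall.isLittleO_boundary {n : ℕ} [NeZero n] {s : ℝ} (hs : s ∈ Ioo (0 : ℝ) 1)
    {u f : EuclideanSpace ℝ (Fin n) → ℝ} (hu : SolvesInBall n s u f) (hf : Continuous f) {M : ℝ}
    (hM : ∀ x, |f x| ≤ M) {e : EuclideanSpace ℝ (Fin n)} (he : ‖e‖ = 1) :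
    (fun x => u x - (kappaC n s / s * ∫ z, f z * ballKernel n s e z) * max (1 - ‖x‖ ^ 2) 0 ^ s)
      =o[nhds e] fun x => max (1 - ‖x‖ ^ 2) 0 ^ s := by
  obtain ⟨C, hC⟩ := exists_barrier n hs
  set I := ∫ z, ballKernel n s e z with hI
  set k := |kappaC n s / s| with hk
  set T := kappaC n s / s * ∫ z, f z * ballKernel n s e z with hT
  rw [Asymptotics.isLittleO_iff]
  intro ε hε
  have hI0 : 0 < I := integral_ballKernel_boundary_pos n hs.1 he
  set η := ε / (2 * (2 * |C| + k * I + 1)) with hη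
  have hη0 : 0 < η := by positivity
  obtain ⟨c, hc⟩ := exists_approx_ballKernelLap n hs hf hη0
  set fc : EuclideanSpace ℝ (Fin n) → ℝ := ∑ b ∈ c.support, c b • ballKernelLap n s b with hfc
  set uc : EuclideanSpace ℝ (Fin n) → ℝ := ∑ b ∈ c.support, c b • ballKernel n s b with huc
  have hsc : SolvesInBall n s uc fc := SolvesInBall.sum hs.1 c.support
    (u := fun b => c b • ballKernel n s b) (f := fun b => c b • ballKernelLap n s b)
    fun b => (solvesInBall_ballKernel n hs b.2).smul (c b)
  have hfcx : ∀ x, fc x = ∑ b ∈ c.support, c b * ballKernelLap n s b x := by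
    intro x; simp [hfc]
  set h : EuclideanSpace ℝ (Fin n) → ℝ :=
    fun x => ∑ b ∈ c.support, c b * (1 / ‖x - b‖ ^ n) with hh
  have hucx : ∀ x, uc x = h x * max (1 - ‖x‖ ^ 2) 0 ^ s := by
    intro x
    simp only [huc, hh, Finset.sum_apply, Pi.smul_apply, smul_eq_mul, Finset.sum_mul, ballKernel]
    exact Finset.sum_congr rfl fun b _ => by ring
  have hdiff : ∀ x, |u x - uc x| ≤ |C| * (2 * η) * max (1 - ‖x‖ ^ 2) 0 ^ s := by
    intro x
    have h1 := hC _ _ (2 * η) (hu.add hs.1 (hsc.smul (-1))) (by positivity) (fun y hy => by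
      have h2 := hc y (ball_subset_closedBall hy)
      rw [← hfcx] at h2
      simp only [Pi.add_apply, Pi.smul_apply, smul_eq_mul, neg_one_mul, ← sub_eq_add_neg]
      linarith) x
    simp only [Pi.add_apply, Pi.smul_apply, smul_eq_mul, neg_one_mul, ← sub_eq_add_neg] at h1
    refine h1.trans ?_
    gcongr
    exact le_abs_self C
  have hInt : Integrable fun z => fc z * ballKernel n s e z := by
    simp only [hfcx, Finset.sum_mul, mul_assoc]
    exact integrable_finsetSum _ fun b _ => (integrable_ballKernelLap_mul n hs he b.2).const_mul _
  have hintf : Integrable fun z => f z * ballKernel n s e z :=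
    (integrable_ballKernel_boundary n hs.1 he).bdd_mul (c := M) hf.aestronglyMeasurable
      (Eventually.of_forall hM)
  have hhe : h e = kappaC n s / s * ∫ z, fc z * ballKernel n s e z := by
    simp only [hfcx, Finset.sum_mul, mul_assoc]
    rw [integral_finsetSum _ fun b _ =>
      (integrable_ballKernelLap_mul n hs he b.2).const_mul _, Finset.mul_sum]
    refine Finset.sum_congr rfl fun b _ => ?_
    rw [integral_const_mul, ← kappaC_mul_integral_ballKernelLap n hs he b.2]
    ring
  have hTe : |h e - T| ≤ k * (η * I) := by
    rw [hhe, hT, ← mul_sub, abs_mul, ← integral_sub hInt hintf, hI, ← integral_const_mul]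
    refine mul_le_mul_of_nonneg_left ?_ (abs_nonneg _)
    rw [← Real.norm_eq_abs]
    refine norm_integral_le_of_norm_le ((integrable_ballKernel_boundary n hs.1 he).const_mul η)
      (Eventually.of_forall fun z => ?_)
    by_cases hz : z ∈ ball (0 : EuclideanSpace ℝ (Fin n)) 1
    · have h2 := hc z (ball_subset_closedBall hz)
      rw [← hfcx, abs_sub_comm] at h2
      have h3 : 0 ≤ ballKernel n s e z := by unfold ballKernel; positivity
      rw [← sub_mul, norm_mul, Real.norm_eq_abs, Real.norm_eq_abs, abs_of_nonneg h3]
      gcongr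
    · simp [ballKernel_eq_zero n hs.1 e hz]
  have hcont : ContinuousAt h e := by
    refine tendsto_finsetSum _ fun b _ => ?_
    have hbe : e ≠ b := by
      intro h
      have := b.2
      rw [← h] at this
      linarith
    have hd : ‖e - b‖ ^ n ≠ 0 := pow_ne_zero _ (norm_ne_zero_iff.2 (sub_ne_zero.2 hbe))
    have : ContinuousAt (fun x : EuclideanSpace ℝ (Fin n) => c b * (1 / ‖x - b‖ ^ n)) e :=
      continuousAt_const.mul (ContinuousAt.div (by fun_prop) (by fun_prop) hd)
    exact this
  have hnear : ∀ᶠ x in nhds e, |h x - h e| < ε / 2 := by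
    have := Metric.tendsto_nhds.1 hcont (ε / 2) (by positivity)
    simpa [Real.dist_eq] using this
  filter_upwards [hnear] with x hx
  have hd0 : 0 ≤ max (1 - ‖x‖ ^ 2) 0 ^ s := by positivity
  rw [Real.norm_eq_abs, Real.norm_eq_abs, abs_of_nonneg hd0]
  set d := max (1 - ‖x‖ ^ 2) 0 ^ s with hd
  have e1 : u x - T * d = (u x - uc x) + ((h x - h e) + (h e - T)) * d := by
    rw [hucx]; ring
  have e2 : |C| * (2 * η) + k * (η * I) ≤ ε / 2 := by
    have : (2 * |C| + k * I + 1) * η = ε / 2 := by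
      have hpos : 2 * |C| + k * I + 1 ≠ 0 := by positivity
      rw [hη, mul_div_assoc', mul_comm, mul_div_mul_right _ _ hpos]
    linarith
  rw [e1]
  calc _ ≤ |u x - uc x| + |(h x - h e) + (h e - T)| * d := by
        refine (abs_add_le _ _).trans ?_
        rw [abs_mul, abs_of_nonneg hd0]
    _ ≤ |C| * (2 * η) * d + (ε / 2 + k * (η * I)) * d := by
        gcongr
        · exact hdiff x
        · exact (abs_add_le _ _).trans (add_le_add hx.le hTe)
    _ = (|C| * (2 * η) + k * (η * I) + ε / 2) * d := by ring
    _ ≤ ε * d := by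
        gcongr
        linarith

theorem contDiff_hasCompactSupport_dirDeriv {n : ℕ} (v : EuclideanSpace ℝ (Fin n))
    {g : EuclideanSpace ℝ (Fin n) → ℝ} (hg : ContDiff ℝ (⊤ : ℕ∞) g ∧ HasCompactSupport g) :
    ContDiff ℝ (⊤ : ℕ∞) (dirDeriv v g) ∧ HasCompactSupport (dirDeriv v g) := by
  have h : dirDeriv v g = fun p => fderiv ℝ g p v := by
    ext p
    exact (hg.1.differentiable (by simp) p).lineDeriv_eq_fderiv
  rw [h]
  refine ⟨(hg.1.fderiv_right (m := (⊤ : ℕ∞)) (by simp)).clm_apply contDiff_const, ?_⟩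
  exact hg.2.fderiv_apply ℝ v

theorem contDiff_hasCompactSupport_multiDeriv {n : ℕ} (α : Fin n → ℕ)
    {g : EuclideanSpace ℝ (Fin n) → ℝ} (hg : ContDiff ℝ (⊤ : ℕ∞) g ∧ HasCompactSupport g) :
    ContDiff ℝ (⊤ : ℕ∞) (multiDeriv α g) ∧ HasCompactSupport (multiDeriv α g) := by
  unfold multiDeriv
  generalize (Finset.univ : Finset (Fin n)).toList = l
  induction l with
  | nil => exact hg
  | cons i l ih =>
    rw [List.foldr_cons]
    generalize List.foldr _ g l = h at ih
    induction α i with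
    | zero => exact ih
    | succ k ihk =>
      rw [Function.iterate_succ_apply']
      exact contDiff_hasCompactSupport_dirDeriv _ ihk

/-- Rescaling `(1 - |x|²)₊^s` around a boundary point. -/
theorem rpow_neg_mul_max_one_sub_norm_sq {n : ℕ} (s : ℝ) {e : EuclideanSpace ℝ (Fin n)}
    (he : ‖e‖ = 1) (X : EuclideanSpace ℝ (Fin n)) {ε : ℝ} (hε : 0 < ε) :
    ε ^ (-s) * max (1 - ‖e + ε • X‖ ^ 2) 0 ^ s = max (-(2 * ⟪e, X⟫) - ε * ‖X‖ ^ 2) 0 ^ s := by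
  have h1 : 1 - ‖e + ε • X‖ ^ 2 = ε * (-(2 * ⟪e, X⟫) - ε * ‖X‖ ^ 2) := by
    rw [norm_add_sq_real, inner_smul_right, norm_smul, he, Real.norm_eq_abs, abs_of_pos hε]
    ring
  have h2 : max (1 - ‖e + ε • X‖ ^ 2) 0 = ε * max (-(2 * ⟪e, X⟫) - ε * ‖X‖ ^ 2) 0 := by
    rw [h1, mul_max_of_nonneg _ _ hε.le, mul_zero]
  rw [h2, Real.mul_rpow hε.le (le_max_right _ _), ← mul_assoc, ← Real.rpow_add hε,
    neg_add_cancel, Real.rpow_zero, one_mul]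

/-- Blow-up at a boundary point of a function comparable to `(1 - |x|²)₊^s`. -/
theorem tendsto_blowup {n : ℕ} {s : ℝ} (hs : 0 < s) {u : EuclideanSpace ℝ (Fin n) → ℝ} {T : ℝ}
    {e : EuclideanSpace ℝ (Fin n)} (he : ‖e‖ = 1)
    (hu : (fun x => u x - T * max (1 - ‖x‖ ^ 2) 0 ^ s) =o[nhds e]
      fun x => max (1 - ‖x‖ ^ 2) 0 ^ s) (X : EuclideanSpace ℝ (Fin n)) :
    Tendsto (fun ε : ℝ => ε ^ (-s) * u (e + ε • X)) (nhdsWithin 0 (Ioi 0))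
      (nhds (2 ^ s * T * max (-⟪e, X⟫) 0 ^ s)) := by
  have hd : Tendsto (fun ε : ℝ => ε ^ (-s) * max (1 - ‖e + ε • X‖ ^ 2) 0 ^ s)
      (nhdsWithin 0 (Ioi 0)) (nhds (2 ^ s * max (-⟪e, X⟫) 0 ^ s)) := by
    have hc : Continuous fun ε : ℝ => max (-(2 * ⟪e, X⟫) - ε * ‖X‖ ^ 2) 0 ^ s :=
      Continuous.rpow_const (by fun_prop) fun _ => Or.inr hs.le
    have h0 := (hc.tendsto 0).mono_left (nhdsWithin_le_nhds (s := Ioi (0 : ℝ)))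
    have hval : max (-(2 * ⟪e, X⟫) - 0 * ‖X‖ ^ 2) 0 ^ s = 2 ^ s * max (-⟪e, X⟫) 0 ^ s := by
      rw [← Real.mul_rpow zero_le_two (le_max_right _ _), mul_max_of_nonneg _ _ zero_le_two]
      simp
    rw [hval] at h0
    refine h0.congr' ?_
    filter_upwards [self_mem_nhdsWithin] with ε hε
    exact (rpow_neg_mul_max_one_sub_norm_sq s he X hε).symm
  have hline : Tendsto (fun ε : ℝ => e + ε • X) (nhdsWithin 0 (Ioi 0)) (nhds e) := by
    have hc : Continuous fun ε : ℝ => e + ε • X := by fun_prop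
    have h0 := (hc.tendsto 0).mono_left (nhdsWithin_le_nhds (s := Ioi (0 : ℝ)))
    simpa using h0
  have ho : Tendsto (fun ε : ℝ => ε ^ (-s) *
      (u (e + ε • X) - T * max (1 - ‖e + ε • X‖ ^ 2) 0 ^ s)) (nhdsWithin 0 (Ioi 0)) (nhds 0) := by
    refine (Asymptotics.isLittleO_one_iff ℝ).1 ?_
    refine ((Asymptotics.isBigO_refl (fun ε : ℝ => ε ^ (-s)) _).mul_isLittleO
      (hu.comp_tendsto hline)).trans_isBigO ?_
    exact hd.isBigO_one ℝ
  have := ho.add (hd.const_mul T)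
  rw [zero_add, ← mul_assoc, mul_comm T] at this
  refine this.congr fun ε => ?_
  ring

/-- Distributional boundary expansion of the first Dirichlet eigenfunction `φ⋆` of `(-Δ)^s`
in `B₁`: for every multi-index `α` and test function `ψ`,
`lim_{ε→0⁺} ε^{-s} ∫ φ⋆(e+εX) ∂^α ψ(X) dX = κ⋆ λ⋆ ∫ (-e·X)₊^s ∂^α ψ(X) dX`. -/
theorem eigenfunction_boundary_expansion_distributional
    (n : ℕ) (hn : 1 ≤ n) (s : ℝ) (hs : s ∈ Set.Ioo (0 : ℝ) 1)
    (e : EuclideanSpace ℝ (Fin n)) (he : ‖e‖ = 1)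
    (φ : EuclideanSpace ℝ (Fin n) → ℝ) (lam : ℝ) (hlam : 0 < lam)
    (hφc : Continuous φ)
    (hφ0 : ∀ z ∉ Metric.ball (0 : EuclideanSpace ℝ (Fin n)) 1, φ z = 0)
    (hφpos : ∀ z ∈ Metric.ball (0 : EuclideanSpace ℝ (Fin n)) 1, 0 < φ z)
    (hφL2 : ∫ z in Metric.ball (0 : EuclideanSpace ℝ (Fin n)) 1, φ z ^ 2 = 1)
    (hφHolder : ∃ C : ℝ, ∀ x y : EuclideanSpace ℝ (Fin n), |φ x - φ y| ≤ C * ‖x - y‖ ^ s)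
    (hφeig : ∀ x ∈ Metric.ball (0 : EuclideanSpace ℝ (Fin n)) 1,
      HasFracLap n s φ x (lam * φ x))
    (κ : ℝ)
    (hκ : κ = 2 ^ s * kappaC n s *
      ∫ z in Metric.ball (0 : EuclideanSpace ℝ (Fin n)) 1,
        φ z * (1 - ‖z‖ ^ 2) ^ s / (s * ‖z - e‖ ^ n))
    (α : Fin n → ℕ)
    (ψ : EuclideanSpace ℝ (Fin n) → ℝ) (hψ : ContDiff ℝ (⊤ : ℕ∞) ψ) (hψc : HasCompactSupport ψ) :
    Tendsto (fun ε : ℝ =>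
        ε ^ (-s) * ∫ X : EuclideanSpace ℝ (Fin n), φ (e + ε • X) * multiDeriv α ψ X)
      (nhdsWithin 0 (Set.Ioi 0))
      (nhds (κ * lam *
        ∫ X : EuclideanSpace ℝ (Fin n), max (-⟪e, X⟫) 0 ^ s * multiDeriv α ψ X)) := by
  have : NeZero n := ⟨by omega⟩
  obtain ⟨M, hM⟩ := exists_bound_of_continuous_of_eq_zero hφc hφ0
  obtain ⟨C, hC⟩ := hφHolder
  have hsol : SolvesInBall n s φ fun x => lam * φ x := ⟨hφc, hφ0, hφeig⟩
  have hexp := hsol.isLittleO_boundary hs (hφc.const_mul lam) (M := lam * M) (fun x => by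
    rw [abs_mul, abs_of_pos hlam]
    exact mul_le_mul_of_nonneg_left (hM x) hlam.le) he
  set T := kappaC n s / s * ∫ z, lam * φ z * ballKernel n s e z with hT
  have hκT : κ * lam = 2 ^ s * T := by
    have h1 : ∫ z in ball (0 : EuclideanSpace ℝ (Fin n)) 1,
        φ z * (1 - ‖z‖ ^ 2) ^ s / (s * ‖z - e‖ ^ n) = s⁻¹ * ∫ z, φ z * ballKernel n s e z := by
      have h2 : ∫ z in ball (0 : EuclideanSpace ℝ (Fin n)) 1, φ z * ballKernel n s e z =
          ∫ z, φ z * ballKernel n s e z :=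
        setIntegral_eq_integral_of_forall_compl_eq_zero fun z hz => by simp [hφ0 z hz]
      rw [← h2, ← integral_const_mul]
      refine setIntegral_congr_fun measurableSet_ball fun z hz => ?_
      have hz1 : ‖z‖ < 1 := by simpa using hz
      have hz2 : 0 ≤ 1 - ‖z‖ ^ 2 := by nlinarith [norm_nonneg z]
      simp only [ballKernel, max_eq_left hz2]
      rw [div_eq_mul_inv, mul_inv, one_div]
      ring
    rw [hκ, hT, h1]
    simp only [mul_assoc lam]
    rw [integral_const_mul]
    ring
  obtain ⟨hgc, hgs⟩ := contDiff_hasCompactSupport_multiDeriv α ⟨hψ, hψc⟩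
  set g := multiDeriv α ψ with hg
  have hgcont : Continuous g := hgc.continuous
  have hφe : φ e = 0 := hφ0 e (by simp [he])
  rw [hκT, ← integral_const_mul]
  simp only [← integral_const_mul, ← mul_assoc]
  refine tendsto_integral_filter_of_dominated_convergence (fun X => C * ‖X‖ ^ s * |g X|) ?_ ?_ ?_ ?_
  · refine Eventually.of_forall fun ε => Continuous.aestronglyMeasurable ?_
    fun_prop
  · filter_upwards [self_mem_nhdsWithin] with ε (hε : 0 < ε)
    refine Eventually.of_forall fun X => ?_
    have h1 := hC (e + ε • X) e
    rw [hφe, sub_zero, add_sub_cancel_left, norm_smul, Real.norm_eq_abs, abs_of_pos hε,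
      Real.mul_rpow hε.le (norm_nonneg _)] at h1
    rw [norm_mul, norm_mul, Real.norm_eq_abs, Real.norm_eq_abs, Real.norm_eq_abs,
      abs_of_nonneg (Real.rpow_nonneg hε.le _)]
    refine mul_le_mul_of_nonneg_right ?_ (abs_nonneg _)
    calc ε ^ (-s) * |φ (e + ε • X)| ≤ ε ^ (-s) * (C * (ε ^ s * ‖X‖ ^ s)) := by gcongr
      _ = ε ^ (-s + s) * (C * ‖X‖ ^ s) := by rw [Real.rpow_add hε]; ring
      _ = C * ‖X‖ ^ s := by simp
  · refine Continuous.integrable_of_hasCompactSupport ?_ hgs.abs.mul_left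
    have : Continuous fun X : EuclideanSpace ℝ (Fin n) => ‖X‖ ^ s :=
      continuous_norm.rpow_const fun _ => Or.inr hs.1.le
    fun_prop
  · exact Eventually.of_forall fun X => (tendsto_blowup hs.1 he hexp X).mul_const (g X)
end

section
/- Let $n\geq 1$, $s\in(0,1)$, $e\in\partial B_1\subset\mathbb{R}^n$, $\omega\in\partial B_1$ and $\varepsilon_o>0$ be such that $e+\varepsilon\omega\in B_1$ for all $\varepsilon\in(0,\varepsilon_o]$. Let $\alpha\in(0,1)$ and let $f\in C^\alpha(\mathbb{R}^n)$ with $f=0$ outside $B_1$. Then $\lim_{\varepsilon\searrow0}\varepsilon^{-s}\int_{B_1}f(z)\,G(e+\varepsilon\omega,z)\,dz=\int_{B_1}f(z)\,\frac{(-2\,e\cdot\omega)^s\,(1-|z|^2)^s}{s\,|z-e|^n}\,dz$. -/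
open MeasureTheory Filter Metric Set intervalIntegral
open scoped RealInnerProductSpace

/-- `r₀(x,z) = (1-|x|²)(1-|z|²)/|z-x|²`. -/
noncomputable def rZero {n : ℕ} (x z : EuclideanSpace ℝ (Fin n)) : ℝ :=
  (1 - ‖x‖ ^ 2) * (1 - ‖z‖ ^ 2) / ‖z - x‖ ^ 2

/-- The fractional Green-type function
`G(x,z) = |z-x|^{2s-n} ∫₀^{r₀(x,z)} t^{s-1} (t+1)^{-n/2} dt`. -/
noncomputable def fracGreen (n : ℕ) (s : ℝ) (x z : EuclideanSpace ℝ (Fin n)) : ℝ :=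
  ‖z - x‖ ^ (2 * s - n) * ∫ t in (0 : ℝ)..(rZero x z), t ^ (s - 1) / (t + 1) ^ ((n : ℝ) / 2)

theorem intervalIntegrable_profile {s a : ℝ} (hs : 0 < s) (ha : 0 ≤ a) {r : ℝ} (hr : 0 ≤ r) :
    IntervalIntegrable (fun t : ℝ => t ^ (s - 1) / (t + 1) ^ a) volume 0 r := by
  refine (intervalIntegrable_rpow' (r := s - 1) (by linarith)).mono_fun
    (Measurable.aestronglyMeasurable (by fun_prop)) ?_
  rw [uIoc_of_le hr]
  filter_upwards [ae_restrict_mem measurableSet_Ioc] with t ht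
  have h1 : (1 : ℝ) ≤ (t + 1) ^ a := Real.one_le_rpow (by linarith [ht.1]) ha
  rw [norm_div, Real.norm_of_nonneg (by linarith : (0 : ℝ) ≤ (t + 1) ^ a)]
  exact div_le_self (norm_nonneg _) h1

theorem profile_nonneg {s a r : ℝ} (hr : 0 ≤ r) :
    0 ≤ ∫ t in (0 : ℝ)..r, t ^ (s - 1) / (t + 1) ^ a := by
  refine integral_nonneg hr fun t ht => ?_
  have := ht.1
  positivity

theorem profile_le {s a b r : ℝ} (hs : 0 < s) (hb : 0 < b) (hbs : b ≤ s) (hba : s - b ≤ a)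
    (hr : 0 ≤ r) :
    ∫ t in (0 : ℝ)..r, t ^ (s - 1) / (t + 1) ^ a ≤ r ^ b / b := by
  have hint : ∫ t in (0 : ℝ)..r, t ^ (b - 1) = r ^ b / b := by
    rw [integral_rpow (Or.inl (by linarith)), sub_add_cancel, Real.zero_rpow hb.ne', sub_zero]
  rw [← hint]
  refine integral_mono_on_of_le_Ioo hr (intervalIntegrable_profile hs (by linarith) hr)
    (intervalIntegrable_rpow' (by linarith)) fun t ht => ?_
  have ht0 : 0 < t := ht.1
  have h1 : t ^ (s - b) ≤ (t + 1) ^ a :=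
    (Real.rpow_le_rpow ht0.le (by linarith) (by linarith)).trans
      (Real.rpow_le_rpow_of_exponent_le (by linarith) hba)
  rw [div_le_iff₀ (by positivity)]
  calc t ^ (s - 1) = t ^ (b - 1) * t ^ (s - b) := by
        rw [← Real.rpow_add ht0]; congr 1; ring
    _ ≤ t ^ (b - 1) * (t + 1) ^ a := by gcongr

theorem le_profile {s a r : ℝ} (hs : 0 < s) (ha : 0 ≤ a) (hr : 0 ≤ r) :
    r ^ s / s / (r + 1) ^ a ≤ ∫ t in (0 : ℝ)..r, t ^ (s - 1) / (t + 1) ^ a := by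
  have hint : ∫ t in (0 : ℝ)..r, t ^ (s - 1) / (r + 1) ^ a = r ^ s / s / (r + 1) ^ a := by
    rw [intervalIntegral.integral_div, integral_rpow (Or.inl (by linarith)), sub_add_cancel,
      Real.zero_rpow hs.ne', sub_zero]
  rw [← hint]
  refine integral_mono_on_of_le_Ioo hr ((intervalIntegrable_rpow' (by linarith)).div_const _)
    (intervalIntegrable_profile hs ha hr) fun t ht => ?_
  have ht0 : 0 < t := ht.1
  have := ht.2
  gcongr

theorem measurable_profile {s a : ℝ} (hs : 0 < s) (ha : 0 ≤ a) :
    Measurable (fun r : ℝ => ∫ t in (0 : ℝ)..(max r 0), t ^ (s - 1) / (t + 1) ^ a) := by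
  refine Monotone.measurable fun r₁ r₂ h => ?_
  refine integral_mono_interval le_rfl (le_max_right _ _) (max_le_max_right 0 h) ?_
    (intervalIntegrable_profile hs ha (le_max_right _ _))
  filter_upwards [ae_restrict_mem measurableSet_Ioc] with t ht
  have := ht.1
  simp only [Pi.zero_apply]
  positivity

theorem integrableOn_ball_norm_sub_rpow {n : ℕ} (hn : 1 ≤ n) {q : ℝ} (hq : 0 < q)
    (x : EuclideanSpace ℝ (Fin n)) (R : ℝ) :
    IntegrableOn (fun z => ‖z - x‖ ^ (q - n)) (ball x R) := by
  have h0 : IntegrableOn (fun y : EuclideanSpace ℝ (Fin n) => ‖y‖ ^ (q - n)) (ball 0 R) := by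
    refine integrableOn_ball_of_norm_le_rpow (C := 1) (α := n - q) (by simpa using hn)
      (by simpa using hq) (Eventually.of_forall fun y => ?_)
      (Measurable.aestronglyMeasurable (by fun_prop))
    rw [neg_sub, one_mul, Real.norm_of_nonneg (by positivity)]
  have h1 := ((measurePreserving_sub_right volume x).integrableOn_comp_preimage
    (MeasurableEquiv.subRight x).measurableEmbedding).2 h0
  have hpre : (fun z => z - x) ⁻¹' ball 0 R = ball x R := by
    ext z
    simp [dist_eq_norm]
  rwa [hpre] at h1

theorem setIntegral_ball_norm_sub_rpow {n : ℕ} (q : ℝ)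
    (x : EuclideanSpace ℝ (Fin n)) (R : ℝ) :
    ∫ z in ball x R, ‖z - x‖ ^ q = ∫ y in ball (0 : EuclideanSpace ℝ (Fin n)) R, ‖y‖ ^ q := by
  have h1 := (measurePreserving_sub_right volume x).setIntegral_preimage_emb
    (MeasurableEquiv.subRight x).measurableEmbedding (fun y => ‖y‖ ^ q) (ball 0 R)
  rw [← h1]
  congr 2
  ext z
  simp [dist_eq_norm]

theorem tendsto_setIntegral_ball_norm_rpow {n : ℕ} (hn : 1 ≤ n) {q : ℝ} (hq : 0 < q) :
    Tendsto (fun ε : ℝ => ∫ y in ball (0 : EuclideanSpace ℝ (Fin n)) ε, ‖y‖ ^ (q - n))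
      (nhdsWithin 0 (Ioi 0)) (nhds 0) := by
  have hne : Nonempty (Fin n) := ⟨⟨0, hn⟩⟩
  have hint : Integrable ((ball (0 : EuclideanSpace ℝ (Fin n)) 1).indicator
      fun y => ‖y‖ ^ (q - n)) := by
    rw [integrable_indicator_iff measurableSet_ball]
    simpa using integrableOn_ball_norm_sub_rpow hn hq 0 1
  have hvol : Tendsto (volume ∘ fun ε : ℝ => ball (0 : EuclideanSpace ℝ (Fin n)) ε)
      (nhdsWithin 0 (Ioi 0)) (nhds 0) := by
    have h := tendsto_measure_biInter_gt (μ := volume) (a := (0 : ℝ))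
      (s := fun ε => ball (0 : EuclideanSpace ℝ (Fin n)) ε)
      (fun _ _ => measurableSet_ball.nullMeasurableSet)
      (fun _ _ _ hij => ball_subset_ball hij) ⟨1, one_pos, measure_ball_lt_top.ne⟩
    have hzero : ⋂ r > (0 : ℝ), ball (0 : EuclideanSpace ℝ (Fin n)) r = {0} :=
      biInter_gt_ball 0 0 |>.trans closedBall_zero
    rwa [hzero, measure_singleton] at h
  refine (hint.tendsto_setIntegral_nhds_zero hvol).congr' ?_
  filter_upwards [Ioo_mem_nhdsGT one_pos] with ε hε
  refine setIntegral_congr_fun measurableSet_ball fun y hy => ?_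
  exact indicator_of_mem (ball_subset_ball hε.2.le hy) _

theorem one_sub_norm_sq_pos {n : ℕ} {x : EuclideanSpace ℝ (Fin n)} (hx : x ∈ ball 0 1) :
    0 < 1 - ‖x‖ ^ 2 := by
  rw [mem_ball_zero_iff] at hx
  nlinarith [norm_nonneg x]

theorem rZero_nonneg {n : ℕ} {x z : EuclideanSpace ℝ (Fin n)}
    (hx : x ∈ ball 0 1) (hz : z ∈ ball 0 1) : 0 ≤ rZero x z := by
  have := one_sub_norm_sq_pos hx
  have := one_sub_norm_sq_pos hz
  unfold rZero
  positivity

theorem fracGreen_nonneg {n : ℕ} (s : ℝ) {x z : EuclideanSpace ℝ (Fin n)}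
    (hx : x ∈ ball 0 1) (hz : z ∈ ball 0 1) : 0 ≤ fracGreen n s x z :=
  mul_nonneg (by positivity) (profile_nonneg (rZero_nonneg hx hz))

theorem fracGreen_self {n : ℕ} (s : ℝ) (x : EuclideanSpace ℝ (Fin n)) :
    fracGreen n s x x = 0 := by
  simp [fracGreen, rZero]

theorem rpow_mul_rZero_rpow {n : ℕ} {s b : ℝ} {x z : EuclideanSpace ℝ (Fin n)}
    (hx : x ∈ ball 0 1) (hz : z ∈ ball 0 1) (hxz : z ≠ x) :
    ‖z - x‖ ^ (2 * s - n) * rZero x z ^ b =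
      (1 - ‖x‖ ^ 2) ^ b * (1 - ‖z‖ ^ 2) ^ b * ‖z - x‖ ^ (2 * (s - b) - n) := by
  have hd : 0 < ‖z - x‖ := norm_pos_iff.2 (sub_ne_zero.2 hxz)
  have hx' := one_sub_norm_sq_pos hx
  have hz' := one_sub_norm_sq_pos hz
  have hexp : (2 * s - n : ℝ) = (2 * (s - b) - n) + 2 * b := by ring
  rw [rZero, Real.div_rpow (by positivity) (by positivity), Real.mul_rpow hx'.le hz'.le, hexp,
    Real.rpow_add hd, Real.rpow_mul hd.le, Real.rpow_two]
  have : (‖z - x‖ ^ 2) ^ b ≠ 0 := by positivity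
  field_simp

theorem fracGreen_le {n : ℕ} {s b : ℝ} (hb : 0 < b) (hbs : b ≤ s) (hbn : s - b ≤ n / 2)
    {x z : EuclideanSpace ℝ (Fin n)} (hx : x ∈ ball 0 1) (hz : z ∈ ball 0 1) :
    fracGreen n s x z ≤
      (1 - ‖x‖ ^ 2) ^ b * (1 - ‖z‖ ^ 2) ^ b * ‖z - x‖ ^ (2 * (s - b) - n) / b := by
  have hx' := one_sub_norm_sq_pos hx
  have hz' := one_sub_norm_sq_pos hz
  rcases eq_or_ne z x with rfl | hxz
  · rw [fracGreen_self]
    positivity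
  · rw [← rpow_mul_rZero_rpow hx hz hxz, mul_div_assoc]
    exact mul_le_mul_of_nonneg_left
      (profile_le (hb.trans_le hbs) hb hbs hbn (rZero_nonneg hx hz)) (by positivity)

theorem le_fracGreen {n : ℕ} {s : ℝ} (hs : 0 < s)
    {x z : EuclideanSpace ℝ (Fin n)} (hx : x ∈ ball 0 1) (hz : z ∈ ball 0 1) (hxz : z ≠ x) :
    (1 - ‖x‖ ^ 2) ^ s * (1 - ‖z‖ ^ 2) ^ s * ‖z - x‖ ^ (-n : ℝ) / s /
      (rZero x z + 1) ^ ((n : ℝ) / 2) ≤ fracGreen n s x z := by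
  have h := rpow_mul_rZero_rpow (s := s) (b := s) hx hz hxz
  rw [sub_self, mul_zero, zero_sub] at h
  rw [← h, mul_div_assoc, mul_div_assoc]
  exact mul_le_mul_of_nonneg_left
    (le_profile hs (by positivity) (rZero_nonneg hx hz)) (by positivity)

theorem aestronglyMeasurable_indicator_fracGreen {n : ℕ} {s : ℝ} (hs : 0 < s)
    {x : EuclideanSpace ℝ (Fin n)} (hx : x ∈ ball 0 1)
    {f : EuclideanSpace ℝ (Fin n) → ℝ} (hf : Continuous f) (k : ℝ) :
    AEStronglyMeasurable ((ball 0 1).indicator fun z => k * (f z * fracGreen n s x z)) := by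
  have hr : Measurable fun z => rZero x z := by
    unfold rZero
    fun_prop
  have hm : Measurable fun z => k * (f z * (‖z - x‖ ^ (2 * s - n) *
      ∫ t in (0 : ℝ)..(max (rZero x z) 0), t ^ (s - 1) / (t + 1) ^ ((n : ℝ) / 2))) := by
    have h1 := (measurable_profile hs (by positivity : 0 ≤ (n : ℝ) / 2)).comp hr
    have h2 : Measurable fun z => ‖z - x‖ ^ (2 * s - n) := by fun_prop
    exact (hf.measurable.mul (h2.mul h1)).const_mul k
  have hm' := (hm.indicator (measurableSet_ball (x := 0) (ε := 1))).aestronglyMeasurable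
    (μ := volume)
  convert hm' using 1
  refine indicator_congr fun z hz => ?_
  rw [fracGreen, max_eq_left (rZero_nonneg hx hz)]

theorem one_sub_norm_add_smul_sq {n : ℕ} {e ω : EuclideanSpace ℝ (Fin n)} (he : ‖e‖ = 1)
    (hω : ‖ω‖ = 1) (ε : ℝ) : 1 - ‖e + ε • ω‖ ^ 2 = ε * (-2 * ⟪e, ω⟫ - ε) := by
  rw [norm_add_sq_real, he, norm_smul, hω, inner_smul_right, Real.norm_eq_abs, mul_one, sq_abs]
  ring

theorem fracGreen_near_le {n : ℕ} (hn : 1 ≤ n) {s : ℝ} (hs : s ∈ Ioo (0 : ℝ) 1)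
    {x z : EuclideanSpace ℝ (Fin n)} (hx : x ∈ ball 0 1) (hz : z ∈ ball 0 1) {ε : ℝ}
    (hε : 0 < ε) (hxε : 1 - ‖x‖ ^ 2 ≤ 2 * ε) (hzx : ‖z - x‖ < ε) :
    ε ^ (-s) * fracGreen n s x z ≤ 4 / s * ‖z - x‖ ^ (s / 2 - n) := by
  obtain ⟨hs0, hs1⟩ := hs
  have hx' := one_sub_norm_sq_pos hx
  have hz' := one_sub_norm_sq_pos hz
  rcases eq_or_ne z x with rfl | hxz
  · rw [fracGreen_self, mul_zero]
    positivity
  have hd : 0 < ‖z - x‖ := norm_pos_iff.2 (sub_ne_zero.2 hxz)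
  have hn' : (1 : ℝ) ≤ n := by exact_mod_cast hn
  have hG := fracGreen_le (s := s) (b := s / 2) (by linarith) (by linarith) (by linarith) hx hz
  have h1 : (1 - ‖x‖ ^ 2) ^ (s / 2) ≤ 2 * ε ^ (s / 2) := by
    calc (1 - ‖x‖ ^ 2) ^ (s / 2) ≤ (2 * ε) ^ (s / 2) := by gcongr
      _ = 2 ^ (s / 2) * ε ^ (s / 2) := Real.mul_rpow (by norm_num) hε.le
      _ ≤ 2 ^ (1 : ℝ) * ε ^ (s / 2) := by gcongr <;> linarith
      _ = 2 * ε ^ (s / 2) := by rw [Real.rpow_one]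
  have h2 : (1 - ‖z‖ ^ 2) ^ (s / 2) ≤ 1 :=
    Real.rpow_le_one hz'.le (by nlinarith [norm_nonneg z]) (by linarith)
  have h3 : ε ^ (-s) * ε ^ (s / 2) ≤ ‖z - x‖ ^ (-(s / 2)) := by
    rw [← Real.rpow_add hε]
    have : -s + s / 2 = -(s / 2) := by ring
    rw [this]
    exact Real.rpow_le_rpow_of_nonpos hd hzx.le (by linarith)
  calc ε ^ (-s) * fracGreen n s x z
      ≤ ε ^ (-s) * (2 * ε ^ (s / 2) * 1 * ‖z - x‖ ^ (2 * (s - s / 2) - n) / (s / 2)) := by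
        refine mul_le_mul_of_nonneg_left (hG.trans ?_) (by positivity)
        gcongr
    _ = 4 / s * ((ε ^ (-s) * ε ^ (s / 2)) * ‖z - x‖ ^ (2 * (s - s / 2) - n)) := by
        field_simp
        ring
    _ ≤ 4 / s * (‖z - x‖ ^ (-(s / 2)) * ‖z - x‖ ^ (2 * (s - s / 2) - n)) := by gcongr
    _ = 4 / s * ‖z - x‖ ^ (s / 2 - n) := by
        rw [← Real.rpow_add hd]
        congr 2
        ring

theorem fracGreen_far_le {n : ℕ} {s : ℝ} (hs : s ∈ Ioo (0 : ℝ) 1)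
    {e x z : EuclideanSpace ℝ (Fin n)} (he : ‖e‖ = 1) (hx : x ∈ ball 0 1) (hz : z ∈ ball 0 1)
    {ε : ℝ} (hε : 0 < ε) (hxε : 1 - ‖x‖ ^ 2 ≤ 2 * ε) (hxe : ‖x - e‖ = ε) (hzx : ε ≤ ‖z - x‖) :
    ε ^ (-s) * fracGreen n s x z ≤ 4 * 2 ^ n / s * ‖z - e‖ ^ (s - n) := by
  obtain ⟨hs0, hs1⟩ := hs
  have hx' := one_sub_norm_sq_pos hx
  have hz' := one_sub_norm_sq_pos hz
  have hd : 0 < ‖z - x‖ := hε.trans_le hzx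
  have hze : z ≠ e := by
    rintro rfl
    simp [he] at hz
  have hd' : 0 < ‖z - e‖ := norm_pos_iff.2 (sub_ne_zero.2 hze)
  have htri : ‖z - e‖ ≤ 2 * ‖z - x‖ := by
    have := norm_sub_le_norm_sub_add_norm_sub z x e
    linarith
  have hpow : ∀ y : ℝ, 0 ≤ y → (2 * y) ^ s ≤ 2 * y ^ s := fun y hy => by
    rw [Real.mul_rpow (by norm_num) hy]
    gcongr
    calc (2 : ℝ) ^ s ≤ 2 ^ (1 : ℝ) := Real.rpow_le_rpow_of_exponent_le (by norm_num) hs1.le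
      _ = 2 := Real.rpow_one 2
  have hG := fracGreen_le (n := n) hs0 le_rfl (by rw [sub_self]; positivity) hx hz
  rw [sub_self, mul_zero, zero_sub] at hG
  have h1 : (1 - ‖x‖ ^ 2) ^ s ≤ 2 * ε ^ s :=
    (Real.rpow_le_rpow hx'.le hxε hs0.le).trans (hpow ε hε.le)
  have h2 : (1 - ‖z‖ ^ 2) ^ s ≤ 2 * ‖z - e‖ ^ s := by
    refine (Real.rpow_le_rpow hz'.le ?_ hs0.le).trans (hpow _ hd'.le)
    have h := norm_sub_norm_le e z
    rw [he, norm_sub_rev] at h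
    rw [mem_ball_zero_iff] at hz
    nlinarith [norm_nonneg z]
  have h3 : ‖z - x‖ ^ (-n : ℝ) ≤ 2 ^ n * ‖z - e‖ ^ (-n : ℝ) := by
    rw [Real.rpow_neg hd.le, Real.rpow_neg hd'.le, Real.rpow_natCast, Real.rpow_natCast,
      ← div_eq_mul_inv, inv_le_comm₀ (by positivity) (by positivity), inv_div,
      div_le_iff₀ (by positivity), mul_comm, ← mul_pow]
    gcongr
  calc ε ^ (-s) * fracGreen n s x z
      ≤ ε ^ (-s) * (2 * ε ^ s * (2 * ‖z - e‖ ^ s) * (2 ^ n * ‖z - e‖ ^ (-n : ℝ)) / s) := by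
        refine mul_le_mul_of_nonneg_left (hG.trans ?_) (by positivity)
        gcongr
    _ = (ε ^ (-s) * ε ^ s) * (4 * 2 ^ n / s * (‖z - e‖ ^ s * ‖z - e‖ ^ (-n : ℝ))) := by ring
    _ = 4 * 2 ^ n / s * ‖z - e‖ ^ (s - n) := by
        rw [← Real.rpow_add hε, neg_add_cancel, Real.rpow_zero, one_mul, ← Real.rpow_add hd',
          ← sub_eq_add_neg]

theorem tendsto_rpow_neg_mul_fracGreen {n : ℕ} {s : ℝ} (hs : 0 < s)
    {e ω z : EuclideanSpace ℝ (Fin n)} (he : ‖e‖ = 1) (hω : ‖ω‖ = 1)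
    {εo : ℝ} (hεo : 0 < εo) (hin : ∀ ε ∈ Ioc (0 : ℝ) εo, e + ε • ω ∈ ball 0 1)
    (hz : z ∈ ball 0 1) :
    Tendsto (fun ε : ℝ => ε ^ (-s) * fracGreen n s (e + ε • ω) z) (nhdsWithin 0 (Ioi 0))
      (nhds ((-2 * ⟪e, ω⟫) ^ s * (1 - ‖z‖ ^ 2) ^ s / (s * ‖z - e‖ ^ n))) := by
  have hze : z ≠ e := by
    rintro rfl
    simp [he] at hz
  have hd : 0 < ‖z - e‖ := norm_pos_iff.2 (sub_ne_zero.2 hze)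
  have hcont : Tendsto (fun ε : ℝ => ‖z - (e + ε • ω)‖) (nhdsWithin 0 (Ioi 0))
      (nhds ‖z - e‖) := by
    have : Continuous fun ε : ℝ => ‖z - (e + ε • ω)‖ := by fun_prop
    simpa using (this.tendsto 0).mono_left nhdsWithin_le_nhds
  have hne : ∀ᶠ ε : ℝ in nhdsWithin 0 (Ioi 0), z ≠ e + ε • ω := by
    filter_upwards [hcont.eventually (lt_mem_nhds hd)] with ε hε h
    simp [← h] at hε
  have hmajor : Tendsto (fun ε : ℝ => (-2 * ⟪e, ω⟫ - ε) ^ s * (1 - ‖z‖ ^ 2) ^ s *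
      ‖z - (e + ε • ω)‖ ^ (-n : ℝ) / s) (nhdsWithin 0 (Ioi 0))
      (nhds ((-2 * ⟪e, ω⟫) ^ s * (1 - ‖z‖ ^ 2) ^ s / (s * ‖z - e‖ ^ n))) := by
    have h1 : Tendsto (fun ε : ℝ => (-2 * ⟪e, ω⟫ - ε) ^ s) (nhdsWithin 0 (Ioi 0))
        (nhds ((-2 * ⟪e, ω⟫) ^ s)) := by
      have : Continuous fun ε : ℝ => (-2 * ⟪e, ω⟫ - ε) ^ s :=
        (by fun_prop : Continuous fun ε : ℝ => -2 * ⟪e, ω⟫ - ε).rpow_const fun _ => Or.inr hs.le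
      simpa using (this.tendsto 0).mono_left nhdsWithin_le_nhds
    have h2 := hcont.rpow_const (p := (-n : ℝ)) (Or.inl hd.ne')
    convert ((h1.mul_const ((1 - ‖z‖ ^ 2) ^ s)).mul h2).div_const s using 2
    rw [Real.rpow_neg hd.le, Real.rpow_natCast]
    field_simp
  have hr : Tendsto (fun ε : ℝ => (rZero (e + ε • ω) z + 1) ^ ((n : ℝ) / 2))
      (nhdsWithin 0 (Ioi 0)) (nhds 1) := by
    have h0 : Tendsto (fun ε : ℝ => rZero (e + ε • ω) z) (nhdsWithin 0 (Ioi 0)) (nhds 0) := by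
      have hx : Tendsto (fun ε : ℝ => 1 - ‖e + ε • ω‖ ^ 2) (nhdsWithin 0 (Ioi 0)) (nhds 0) := by
        have : Continuous fun ε : ℝ => 1 - ‖e + ε • ω‖ ^ 2 := by fun_prop
        simpa [he] using (this.tendsto 0).mono_left nhdsWithin_le_nhds
      have := (hx.mul_const (1 - ‖z‖ ^ 2)).div (hcont.pow 2) (by positivity)
      rwa [zero_mul, zero_div] at this
    simpa using (h0.add_const 1).rpow_const (p := (n : ℝ) / 2) (Or.inl (by norm_num))
  have hminor := hmajor.div hr one_ne_zero
  rw [div_one] at hminor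
  have hscale : ∀ ε ∈ Ioc (0 : ℝ) εo,
      ε ^ (-s) * (1 - ‖e + ε • ω‖ ^ 2) ^ s = (-2 * ⟪e, ω⟫ - ε) ^ s := fun ε hε => by
    have hp := one_sub_norm_sq_pos (hin ε hε)
    rw [one_sub_norm_add_smul_sq he hω] at hp ⊢
    have hc : 0 < -2 * ⟪e, ω⟫ - ε := pos_of_mul_pos_right hp hε.1.le
    rw [Real.mul_rpow hε.1.le hc.le, ← mul_assoc, ← Real.rpow_add hε.1, neg_add_cancel,
      Real.rpow_zero, one_mul]
  refine tendsto_of_tendsto_of_tendsto_of_le_of_le' hminor hmajor ?_ ?_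
  · filter_upwards [Ioc_mem_nhdsGT hεo, hne] with ε hε hzx
    have h := mul_le_mul_of_nonneg_left (le_fracGreen hs (hin ε hε) hz hzx)
      (Real.rpow_nonneg hε.1.le (-s))
    refine le_trans (le_of_eq ?_) h
    simp only [Pi.div_apply]
    rw [← hscale ε hε]
    ring
  · filter_upwards [Ioc_mem_nhdsGT hεo] with ε hε
    have h := mul_le_mul_of_nonneg_left
      (fracGreen_le hs le_rfl (by rw [sub_self]; positivity) (hin ε hε) hz)
      (Real.rpow_nonneg hε.1.le (-s))
    rw [sub_self, mul_zero, zero_sub] at h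
    refine h.trans (le_of_eq ?_)
    rw [← hscale ε hε]
    ring

theorem continuous_of_holder {E : Type*} [NormedAddCommGroup E] {f : E → ℝ} {C α : ℝ}
    (hα : 0 < α) (hf : ∀ x y, |f x - f y| ≤ C * ‖x - y‖ ^ α) : Continuous f := by
  refine continuous_iff_continuousAt.2 fun y => ?_
  have h : Continuous fun x => C * ‖x - y‖ ^ α :=
    ((by fun_prop : Continuous fun x => ‖x - y‖).rpow_const fun _ => Or.inr hα.le).const_mul C
  refine tendsto_iff_norm_sub_tendsto_zero.2 (squeeze_zero (fun _ => norm_nonneg _)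
    (fun x => hf x y) ?_)
  simpa [hα.ne'] using h.tendsto y

/-- Boundary asymptotics of the fractional Green function: for `f ∈ C^α(ℝ^n)` vanishing
outside `B₁`, `lim_{ε→0⁺} ε^{-s} ∫_{B₁} f(z) G(e+εω,z) dz
= ∫_{B₁} f(z) (-2 e·ω)^s (1-|z|²)^s / (s |z-e|^n) dz`. -/
theorem green_function_boundary_asymptotics
    (n : ℕ) (hn : 1 ≤ n) (s : ℝ) (hs : s ∈ Set.Ioo (0 : ℝ) 1)
    (α : ℝ) (hα : α ∈ Set.Ioo (0 : ℝ) 1)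
    (e ω : EuclideanSpace ℝ (Fin n)) (he : ‖e‖ = 1) (hω : ‖ω‖ = 1)
    (εo : ℝ) (hεo : 0 < εo)
    (hin : ∀ ε ∈ Set.Ioc (0 : ℝ) εo,
      e + ε • ω ∈ Metric.ball (0 : EuclideanSpace ℝ (Fin n)) 1)
    (f : EuclideanSpace ℝ (Fin n) → ℝ)
    (hfH : ∃ C : ℝ, ∀ x y : EuclideanSpace ℝ (Fin n), |f x - f y| ≤ C * ‖x - y‖ ^ α)
    (hfb : ∃ M : ℝ, ∀ x : EuclideanSpace ℝ (Fin n), |f x| ≤ M)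
    (hf0 : ∀ x ∉ Metric.ball (0 : EuclideanSpace ℝ (Fin n)) 1, f x = 0) :
    Tendsto (fun ε : ℝ =>
        ε ^ (-s) * ∫ z in Metric.ball (0 : EuclideanSpace ℝ (Fin n)) 1,
          f z * fracGreen n s (e + ε • ω) z)
      (nhdsWithin 0 (Set.Ioi 0))
      (nhds (∫ z in Metric.ball (0 : EuclideanSpace ℝ (Fin n)) 1,
          f z * ((-2 * ⟪e, ω⟫) ^ s * (1 - ‖z‖ ^ 2) ^ s / (s * ‖z - e‖ ^ n)))) := by
  obtain ⟨C, hC⟩ := hfH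
  obtain ⟨M, hM⟩ := hfb
  have hM0 : 0 ≤ M := (abs_nonneg _).trans (hM 0)
  have hfc : Continuous f := continuous_of_holder hα.1 hC
  set B := ball (0 : EuclideanSpace ℝ (Fin n)) 1 with hB
  set F : ℝ → EuclideanSpace ℝ (Fin n) → ℝ := fun ε =>
    B.indicator fun z => ε ^ (-s) * (f z * fracGreen n s (e + ε • ω) z) with hF
  set A : ℝ → Set (EuclideanSpace ℝ (Fin n)) := fun ε => ball (e + ε • ω) ε with hA
  have hδ : ∀ ε ∈ Ioc (0 : ℝ) εo, 1 - ‖e + ε • ω‖ ^ 2 ≤ 2 * ε := fun ε hε => by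
    rw [one_sub_norm_add_smul_sq he hω]
    have h := neg_le_of_abs_le (abs_real_inner_le_norm e ω)
    rw [he, hω] at h
    nlinarith [hε.1]
  have hmeas : ∀ ε ∈ Ioc (0 : ℝ) εo, AEStronglyMeasurable (F ε) := fun ε hε =>
    aestronglyMeasurable_indicator_fracGreen hs.1 (hin ε hε) hfc _
  have hFnorm : ∀ ε ∈ Ioc (0 : ℝ) εo, ∀ z ∈ B,
      ‖F ε z‖ ≤ M * (ε ^ (-s) * fracGreen n s (e + ε • ω) z) := fun ε hε z hz => by
    have hG := fracGreen_nonneg s (hin ε hε) hz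
    have hε' : 0 ≤ ε ^ (-s) := Real.rpow_nonneg hε.1.le _
    simp only [hF, indicator_of_mem hz]
    rw [mul_left_comm, norm_mul, Real.norm_of_nonneg (mul_nonneg hε' hG)]
    exact mul_le_mul_of_nonneg_right (hM z) (mul_nonneg hε' hG)
  have hnear : ∀ ε ∈ Ioc (0 : ℝ) εo, ∀ z ∈ A ε,
      ‖F ε z‖ ≤ M * (4 / s) * ‖z - (e + ε • ω)‖ ^ (s / 2 - n) := fun ε hε z hz => by
    have hs0 := hs.1
    by_cases hzB : z ∈ B
    · refine (hFnorm ε hε z hzB).trans ?_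
      rw [mul_assoc]
      exact mul_le_mul_of_nonneg_left (fracGreen_near_le hn hs (hin ε hε) hzB hε.1 (hδ ε hε)
        (by simpa [hA, dist_eq_norm] using hz)) hM0
    · simp only [hF, indicator_of_notMem hzB, norm_zero]
      positivity
  set bound : EuclideanSpace ℝ (Fin n) → ℝ :=
    B.indicator fun z => M * (4 * 2 ^ n / s) * ‖z - e‖ ^ (s - n) with hbound
  have hfar : ∀ ε ∈ Ioc (0 : ℝ) εo, ∀ z ∈ (A ε)ᶜ, ‖F ε z‖ ≤ bound z := fun ε hε z hz => by
    by_cases hzB : z ∈ B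
    · refine (hFnorm ε hε z hzB).trans ?_
      simp only [hbound, indicator_of_mem hzB]
      rw [mul_assoc]
      refine mul_le_mul_of_nonneg_left (fracGreen_far_le hs he (hin ε hε) hzB hε.1 (hδ ε hε)
        ?_ (by simpa [hA, dist_eq_norm] using hz)) hM0
      rw [add_sub_cancel_left, norm_smul, hω, mul_one, Real.norm_of_nonneg hε.1.le]
    · simp [hF, hbound, indicator_of_notMem hzB]
  have hbound_int : Integrable bound := by
    rw [hbound, integrable_indicator_iff measurableSet_ball]
    refine ((integrableOn_ball_norm_sub_rpow hn hs.1 e 2).mono_set fun z hz => ?_).const_mul _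
    have h := norm_sub_le z e
    rw [mem_ball_zero_iff] at hz
    rw [mem_ball, dist_eq_norm]
    linarith
  have hnear_int : ∀ ε, IntegrableOn
      (fun z => M * (4 / s) * ‖z - (e + ε • ω)‖ ^ (s / 2 - n)) (A ε) := fun ε =>
    (integrableOn_ball_norm_sub_rpow hn (half_pos hs.1) _ _).const_mul _
  have hA_meas : ∀ ε, MeasurableSet (A ε) := fun ε => measurableSet_ball
  have hnear_lim : Tendsto (fun ε => ∫ z in A ε, F ε z) (nhdsWithin 0 (Ioi 0)) (nhds 0) := by
    have h0 := (tendsto_setIntegral_ball_norm_rpow hn (half_pos hs.1)).const_mul (M * (4 / s))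
    rw [mul_zero] at h0
    refine squeeze_zero_norm' ?_ h0
    filter_upwards [Ioc_mem_nhdsGT hεo] with ε hε
    rw [← setIntegral_ball_norm_sub_rpow _ (e + ε • ω), ← MeasureTheory.integral_const_mul]
    exact norm_integral_le_of_norm_le (hnear_int ε)
      ((ae_restrict_iff' (hA_meas ε)).2 (Eventually.of_forall (hnear ε hε)))
  have hfar_lim : Tendsto (fun ε => ∫ z in (A ε)ᶜ, F ε z) (nhdsWithin 0 (Ioi 0))
      (nhds (∫ z in B, f z * ((-2 * ⟪e, ω⟫) ^ s * (1 - ‖z‖ ^ 2) ^ s / (s * ‖z - e‖ ^ n)))) := by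
    simp_rw [← MeasureTheory.integral_indicator (hA_meas _).compl]
    rw [← MeasureTheory.integral_indicator measurableSet_ball]
    refine tendsto_integral_filter_of_dominated_convergence bound ?_ ?_ hbound_int ?_
    · filter_upwards [Ioc_mem_nhdsGT hεo] with ε hε
      exact (hmeas ε hε).indicator (hA_meas ε).compl
    · filter_upwards [Ioc_mem_nhdsGT hεo] with ε hε
      refine Eventually.of_forall fun z => ?_
      by_cases hz : z ∈ (A ε)ᶜ
      · rw [indicator_of_mem hz]
        exact hfar ε hε z hz
      · rw [indicator_of_notMem hz, norm_zero]
        have hs0 := hs.1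
        exact indicator_nonneg (fun z _ => by positivity) z
    · refine Eventually.of_forall fun z => ?_
      by_cases hzB : z ∈ B
      · rw [indicator_of_mem hzB]
        refine ((tendsto_rpow_neg_mul_fracGreen hs.1 he hω hεo hin hzB).const_mul (f z)).congr' ?_
        have hze : z ≠ e := by
          rintro rfl
          simp [hB, he] at hzB
        have hd : 0 < ‖z - e‖ / 2 := half_pos (norm_pos_iff.2 (sub_ne_zero.2 hze))
        filter_upwards [Ioc_mem_nhdsGT hd] with ε hε
        have hz : z ∈ (A ε)ᶜ := by
          have h1 := norm_sub_le_norm_sub_add_norm_sub z (e + ε • ω) e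
          rw [add_sub_cancel_left, norm_smul, hω, mul_one, Real.norm_of_nonneg hε.1.le] at h1
          simp only [hA, mem_compl_iff, mem_ball, dist_eq_norm, not_lt]
          linarith [hε.2]
        rw [indicator_of_mem hz]
        simp only [hF, indicator_of_mem hzB]
        ring
      · have hF0 : ∀ ε, F ε z = 0 := fun ε => indicator_of_notMem hzB _
        rw [indicator_of_notMem hzB]
        refine tendsto_const_nhds.congr fun ε => ?_
        exact (indicator_apply_eq_zero.2 fun _ => hF0 ε).symm
  have hsum := hnear_lim.add hfar_lim
  rw [zero_add] at hsum
  refine hsum.congr' ?_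
  filter_upwards [Ioc_mem_nhdsGT hεo] with ε hε
  have h1 : IntegrableOn (F ε) (A ε) := (hnear_int ε).mono' (hmeas ε hε).restrict
    ((ae_restrict_iff' (hA_meas ε)).2 (Eventually.of_forall (hnear ε hε)))
  have h2 : IntegrableOn (F ε) (A ε)ᶜ := hbound_int.integrableOn.mono' (hmeas ε hε).restrict
    ((ae_restrict_iff' (hA_meas ε).compl).2 (Eventually.of_forall (hfar ε hε)))
  have h3 : Integrable (F ε) := by
    rw [← integrableOn_univ, ← union_compl_self (A ε)]
    exact h1.union h2
  rw [integral_add_compl (hA_meas ε) h3, hF, MeasureTheory.integral_indicator measurableSet_ball,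
    MeasureTheory.integral_const_mul]
end
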